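/- arXiv:quant-ph/0509079 — 8 statements merged into one kernel-verified Lean document; each statement's English description precedes it below -/
import Mathlib

section
/- Let m, n ≥ 1 and let D, E be linear subspaces of M_{m×n}(ℂ). Then (D, E) is an intersection pair if and only if there exists a PPT matrix A ∈ 𝕋 with Range A = D̃ and Range A^τ = Ẽ. Moreover, if this is the case, then the relative interior of τ(D,E) equals { A ∈ 𝕋 : Range A = D̃ and Range A^τ = Ẽ }. -/
open Matrix
open scoped ComplexOrder

/-- The partial (block) transpose of `A ∈ M_n ⊗ M_m`:  if `A = ∑ a_{ij} ⊗ e_{ij}`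
(i.e. `A (r,i) (s,j) = (a_{ij}) r s`) then `A^τ = ∑ a_{ji} ⊗ e_{ij}`. -/
def partialTranspose {m n : ℕ} (A : Matrix (Fin n × Fin m) (Fin n × Fin m) ℂ) :
    Matrix (Fin n × Fin m) (Fin n × Fin m) ℂ :=
  Matrix.of fun p q => A (p.1, q.2) (q.1, p.2)

/-- The vectorization `z ↦ z̃ ∈ ℂ^n ⊗ ℂ^m` as a linear map; the component of `z̃` at
the index `(k, i)` is `z i k`. -/
def vecL (m n : ℕ) : Matrix (Fin m) (Fin n) ℂ →ₗ[ℂ] (Fin n × Fin m → ℂ) where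
  toFun z := fun p => z p.2 p.1
  map_add' _ _ := rfl
  map_smul' _ _ := rfl

/-- The cone `𝕋` of matrices of positive partial transpose (PPT matrices). -/
def pptCone (m n : ℕ) : Set (Matrix (Fin n × Fin m) (Fin n × Fin m) ℂ) :=
  {A | A.PosSemidef ∧ (partialTranspose A).PosSemidef}

/-- `Ψ_D`: positive semidefinite matrices with range contained in `D̃`. -/
def PsiD {m n : ℕ} (D : Submodule ℂ (Matrix (Fin m) (Fin n) ℂ)) :
    Set (Matrix (Fin n × Fin m) (Fin n × Fin m) ℂ) :=
  {A | A.PosSemidef ∧ LinearMap.range A.mulVecLin ≤ D.map (vecL m n)}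

/-- `Ψ^E`: matrices whose partial transpose lies in `Ψ_E`. -/
def PsiE {m n : ℕ} (E : Submodule ℂ (Matrix (Fin m) (Fin n) ℂ)) :
    Set (Matrix (Fin n × Fin m) (Fin n × Fin m) ℂ) :=
  {A | partialTranspose A ∈ PsiD E}

/-- `τ(D,E) = Ψ_D ∩ Ψ^E`. -/
def tauSet {m n : ℕ} (D E : Submodule ℂ (Matrix (Fin m) (Fin n) ℂ)) :
    Set (Matrix (Fin n × Fin m) (Fin n × Fin m) ℂ) :=
  PsiD D ∩ PsiE E

/-- `(D, E)` is an intersection pair: `τ(D,E)` is nonempty and its relative interior is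
contained in the relative interiors of both `Ψ_D` and `Ψ^E`. -/
def IsIntersectionPair {m n : ℕ} (D E : Submodule ℂ (Matrix (Fin m) (Fin n) ℂ)) : Prop :=
  (tauSet D E).Nonempty ∧
    intrinsicInterior ℝ (tauSet D E) ⊆ intrinsicInterior ℝ (PsiD D) ∧
    intrinsicInterior ℝ (tauSet D E) ⊆ intrinsicInterior ℝ (PsiE E)

/-!
If the relative interiors of two convex sets meet, their intersection is the relative interior of
the intersection of the sets (Rockafellar). Applied to `Ψ_D` and `Ψ^E`, this makes `(D, E)` an
intersection pair exactly when `ri Ψ_D ∩ ri Ψ^E` is nonempty, and that intersection is then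
`ri τ(D, E)`.

A point `A` of a convex set is relatively interior iff every segment from the set to `A` can be
prolonged beyond `A` inside the set. For positive semidefinite matrices with range in `D̃` this
happens precisely when `Range A = D̃`: a positive semidefinite `B` has its range inside that of `A`
iff `B ≤ c A` for some `c > 0` (Douglas' lemma), and then `A + c⁻¹ (A - B)` is still positive
semidefinite. The partial transpose is a linear involution carrying `Ψ_E` to `Ψ^E`, so it carries
`ri Ψ_E` to `ri Ψ^E`.
-/

section IntrinsicInterior

open AffineMap Topology

theorem mem_intrinsicInterior_iff_mem_nhdsWithin {𝕜 V P : Type*} [Ring 𝕜] [AddCommGroup V]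
    [Module 𝕜 V] [TopologicalSpace P] [AddTorsor V P] {s : Set P} {x : P} :
    x ∈ intrinsicInterior 𝕜 s ↔ x ∈ s ∧ s ∈ 𝓝[affineSpan 𝕜 s] x := by
  refine ⟨fun hx => ⟨intrinsicInterior_subset hx, ?_⟩, fun ⟨hx, h⟩ => ?_⟩
  · obtain ⟨y, hy, rfl⟩ := mem_intrinsicInterior.1 hx
    exact preimage_coe_mem_nhds_subtype.1 (mem_interior_iff_mem_nhds.1 hy)
  · exact mem_intrinsicInterior.2 ⟨⟨x, subset_affineSpan 𝕜 s hx⟩,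
      mem_interior_iff_mem_nhds.2 (preimage_coe_mem_nhds_subtype.2 h), rfl⟩

theorem intrinsicInterior_inter_subset {𝕜 V P : Type*} [Ring 𝕜] [AddCommGroup V]
    [Module 𝕜 V] [TopologicalSpace P] [AddTorsor V P] (s t : Set P) :
    intrinsicInterior 𝕜 s ∩ intrinsicInterior 𝕜 t ⊆ intrinsicInterior 𝕜 (s ∩ t) := by
  simp only [Set.subset_def, Set.mem_inter_iff, mem_intrinsicInterior_iff_mem_nhdsWithin]
  rintro x ⟨⟨hxs, hs⟩, hxt, ht⟩
  exact ⟨⟨hxs, hxt⟩, Filter.inter_mem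
    (nhdsWithin_mono x (affineSpan_mono 𝕜 Set.inter_subset_left) hs)
    (nhdsWithin_mono x (affineSpan_mono 𝕜 Set.inter_subset_right) ht)⟩

theorem mem_openSegment_add_smul_sub {𝕜 V : Type*} [Field 𝕜] [LinearOrder 𝕜]
    [IsStrictOrderedRing 𝕜] [AddCommGroup V] [Module 𝕜 V] (x y : V) {ε : 𝕜} (hε : 0 < ε) :
    x ∈ openSegment 𝕜 y (x + ε • (x - y)) := by
  refine ⟨ε / (1 + ε), 1 / (1 + ε), by positivity, by positivity, by field_simp; ring, ?_⟩
  match_scalars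
  · field_simp
    ring
  · field_simp

variable {V : Type*} [AddCommGroup V] [Module ℝ V] [TopologicalSpace V]
  [IsTopologicalAddGroup V] [ContinuousSMul ℝ V] {s t : Set V} {x y : V}

theorem exists_mem_openSegment_of_mem_intrinsicInterior (hx : x ∈ intrinsicInterior ℝ s)
    (hy : y ∈ s) : ∃ z ∈ s, x ∈ openSegment ℝ y z := by
  obtain ⟨hxs, hs⟩ := mem_intrinsicInterior_iff_mem_nhdsWithin.1 hx
  let ray : ℝ → V := fun ε => x + ε • (x - y)
  have ray_mem (ε : ℝ) : ray ε ∈ affineSpan ℝ s := by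
    have := lineMap_mem (-ε) (subset_affineSpan ℝ s hxs) (subset_affineSpan ℝ s hy)
    rw [lineMap_apply_module'] at this
    convert this using 1
    module
  have ray_tendsto : Filter.Tendsto ray (𝓝[>] 0) (𝓝[affineSpan ℝ s] x) := by
    refine tendsto_nhdsWithin_iff.2 ⟨?_, .of_forall ray_mem⟩
    have : Continuous ray := by fun_prop
    simpa [ray] using this.continuousWithinAt.tendsto (x := (0 : ℝ))
  obtain ⟨ε, hεs, hε⟩ := ((ray_tendsto.eventually hs).and self_mem_nhdsWithin).exists
  exact ⟨ray ε, hεs, mem_openSegment_add_smul_sub x y hε⟩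

-- The dilation about `y` taking the given point of the open segment to `x` pulls the neighbourhood
-- of `x` back, and convexity puts the pulled-back neighbourhood inside `s`.
theorem openSegment_subset_intrinsicInterior (hs : Convex ℝ s) (hx : x ∈ intrinsicInterior ℝ s)
    (hy : y ∈ s) : openSegment ℝ y x ⊆ intrinsicInterior ℝ s := by
  obtain ⟨hxs, hs_nhds⟩ := mem_intrinsicInterior_iff_mem_nhdsWithin.1 hx
  rw [openSegment_eq_image_lineMap]
  rintro _ ⟨r, ⟨hr₀, hr₁⟩, rfl⟩
  have lineMap_r_mem {w : V} (hw : w ∈ s) : lineMap y w r ∈ s :=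
    hs.lineMap_mem hy hw ⟨hr₀.le, hr₁.le⟩
  have lineMap_inv (w : V) : lineMap y (lineMap y w r⁻¹) r = w := by
    simp [lineMap_apply, hr₀.ne']
  have lineMap_inv' : lineMap y (lineMap y x r) r⁻¹ = x := by
    simp [lineMap_apply, hr₀.ne']
  refine mem_intrinsicInterior_iff_mem_nhdsWithin.2 ⟨lineMap_r_mem hxs, ?_⟩
  have dilation_tendsto : Filter.Tendsto (fun w => lineMap y w r⁻¹)
      (𝓝[affineSpan ℝ s] (lineMap y x r)) (𝓝[affineSpan ℝ s] x) := by
    refine tendsto_nhdsWithin_iff.2 ⟨?_, ?_⟩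
    · have : Continuous fun w : V => lineMap y w r⁻¹ := by
        simp only [lineMap_apply_module']
        fun_prop
      simpa [lineMap_inv'] using this.continuousWithinAt.tendsto (x := lineMap y x r)
    · filter_upwards [self_mem_nhdsWithin] with w hw
      exact lineMap_mem _ (subset_affineSpan ℝ s hy) hw
  filter_upwards [dilation_tendsto.eventually hs_nhds] with w hw
  exact lineMap_inv w ▸ lineMap_r_mem hw

theorem intrinsicInterior_inter (hs : Convex ℝ s) (ht : Convex ℝ t)
    (h : (intrinsicInterior ℝ s ∩ intrinsicInterior ℝ t).Nonempty) :
    intrinsicInterior ℝ (s ∩ t) = intrinsicInterior ℝ s ∩ intrinsicInterior ℝ t := by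
  refine Set.Subset.antisymm (fun x hx => ?_) (intrinsicInterior_inter_subset s t)
  obtain ⟨y, hys, hyt⟩ := h
  obtain ⟨z, hz, hxz⟩ := exists_mem_openSegment_of_mem_intrinsicInterior hx
    ⟨intrinsicInterior_subset hys, intrinsicInterior_subset hyt⟩
  rw [openSegment_symm] at hxz
  exact ⟨openSegment_subset_intrinsicInterior hs hys hz.1 hxz,
    openSegment_subset_intrinsicInterior ht hyt hz.2 hxz⟩

variable [T2Space V] [FiniteDimensional ℝ V]

theorem intrinsicInterior_nonempty_of_convex (hs : Convex ℝ s) (hne : s.Nonempty) :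
    (intrinsicInterior ℝ s).Nonempty := by
  let φ := (toEuclidean (E := V)).toContinuousAffineEquiv
  have : (intrinsicInterior ℝ (φ '' s)).Nonempty :=
    (hne.image φ).intrinsicInterior (hs.affine_image φ.toAffineMap)
  rwa [φ.intrinsicInterior_image, Set.image_nonempty] at this

theorem mem_intrinsicInterior_iff_forall_exists_mem_openSegment (hs : Convex ℝ s) :
    x ∈ intrinsicInterior ℝ s ↔ x ∈ s ∧ ∀ y ∈ s, ∃ z ∈ s, x ∈ openSegment ℝ y z := by
  refine ⟨fun hx => ⟨intrinsicInterior_subset hx,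
    fun y hy => exists_mem_openSegment_of_mem_intrinsicInterior hx hy⟩, fun ⟨hx, h⟩ => ?_⟩
  obtain ⟨y, hy⟩ := intrinsicInterior_nonempty_of_convex hs ⟨x, hx⟩
  obtain ⟨z, hz, hxz⟩ := h y (intrinsicInterior_subset hy)
  exact openSegment_subset_intrinsicInterior hs hy hz (openSegment_symm ℝ y z ▸ hxz)

theorem intrinsicInterior_inter_subset_iff (hs : Convex ℝ s) (ht : Convex ℝ t) :
    ((s ∩ t).Nonempty ∧ intrinsicInterior ℝ (s ∩ t) ⊆ intrinsicInterior ℝ s ∧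
      intrinsicInterior ℝ (s ∩ t) ⊆ intrinsicInterior ℝ t) ↔
    (intrinsicInterior ℝ s ∩ intrinsicInterior ℝ t).Nonempty := by
  refine ⟨fun ⟨hne, hsub_s, hsub_t⟩ => ?_, fun h => ?_⟩
  · exact (intrinsicInterior_nonempty_of_convex (hs.inter ht) hne).mono
      (Set.subset_inter hsub_s hsub_t)
  · rw [intrinsicInterior_inter hs ht h]
    exact ⟨h.mono (Set.inter_subset_inter intrinsicInterior_subset intrinsicInterior_subset),
      Set.inter_subset_left, Set.inter_subset_right⟩

end IntrinsicInterior

section RangeOfPosSemidef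

open scoped MatrixOrder

theorem exists_mul_eq_iff_range_mulVecLin_le {R l m n : Type*} [CommSemiring R] [Fintype m]
    [Fintype n] {M : Matrix l m R} {N : Matrix l n R} :
    (∃ Z : Matrix m n R, M * Z = N) ↔
      LinearMap.range N.mulVecLin ≤ LinearMap.range M.mulVecLin := by
  refine ⟨?_, fun h => ?_⟩
  · rintro ⟨Z, rfl⟩
    rw [mulVecLin_mul]
    exact LinearMap.range_comp_le_range _ _
  · classical
    have (j : n) : ∃ v, M *ᵥ v = N.col j :=
      h ⟨Pi.single j 1, by simp⟩
    choose Z hZ using this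
    exact ⟨(of Z)ᵀ, Matrix.ext_col hZ⟩

variable {𝕜 ι κ : Type*} [RCLike 𝕜] [Fintype ι] [Fintype κ]

theorem range_mulVecLin_mul_conjTranspose_self (M : Matrix ι κ 𝕜) :
    LinearMap.range (M * Mᴴ).mulVecLin = LinearMap.range M.mulVecLin :=
  Submodule.eq_of_le_of_finrank_eq (exists_mul_eq_iff_range_mulVecLin_le.1 ⟨Mᴴ, rfl⟩)
    (rank_self_mul_conjTranspose M)

theorem exists_posSemidef_range_mulVecLin_eq (W : Submodule 𝕜 (ι → 𝕜)) :
    ∃ A : Matrix ι ι 𝕜, A.PosSemidef ∧ LinearMap.range A.mulVecLin = W := by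
  classical
  obtain ⟨W', hW⟩ := W.exists_isCompl
  let M := LinearMap.toMatrix' (W.subtype ∘ₗ W.projectionOnto W' hW)
  refine ⟨M * Mᴴ, posSemidef_self_mul_conjTranspose M, ?_⟩
  rw [range_mulVecLin_mul_conjTranspose_self, ← toLin'_apply', toLin'_toMatrix',
    LinearMap.range_comp, Submodule.range_projectionOnto, Submodule.map_subtype_top]

theorem exists_pos_le_smul_one {n : Type*} [Finite n] [DecidableEq n] {A : Matrix n n 𝕜}
    (hA : A.IsHermitian) : ∃ c : ℝ, 0 < c ∧ A ≤ c • 1 := by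
  have := Fintype.ofFinite n
  obtain ⟨c, hc⟩ := (Matrix.finite_real_spectrum (A := A)).bddAbove
  refine ⟨max c 1, by positivity, ?_⟩
  rw [← Algebra.algebraMap_eq_smul_one]
  exact le_algebraMap_of_spectrum_le (fun x hx => (hc hx).trans (le_max_left c 1)) hA

theorem exists_pos_le_smul_of_range_mulVecLin_le {A B : Matrix ι ι 𝕜} (hA : A.PosSemidef)
    (hB : B.PosSemidef) (h : LinearMap.range B.mulVecLin ≤ LinearMap.range A.mulVecLin) :
    ∃ c : ℝ, 0 < c ∧ B ≤ c • A := by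
  classical
  obtain ⟨S, rfl⟩ := CStarAlgebra.nonneg_iff_eq_mul_star_self.1 hA.nonneg
  obtain ⟨N, rfl⟩ := CStarAlgebra.nonneg_iff_eq_mul_star_self.1 hB.nonneg
  simp only [star_eq_conjTranspose, range_mulVecLin_mul_conjTranspose_self] at h
  obtain ⟨Z, rfl⟩ := exists_mul_eq_iff_range_mulVecLin_le.2 h
  obtain ⟨c, hc, hZ⟩ := exists_pos_le_smul_one (posSemidef_self_mul_conjTranspose Z).isHermitian
  refine ⟨c, hc, ?_⟩
  calc S * Z * star (S * Z) = S * (Z * Zᴴ) * star S := by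
        simp only [star_eq_conjTranspose, conjTranspose_mul, Matrix.mul_assoc]
    _ ≤ S * (c • 1) * star S := star_right_conjugate_le_conjugate hZ S
    _ = c • (S * star S) := by simp

-- Writing `A = M Mᴴ` and `B = N Nᴴ`, the sum `A + B` is `K Kᴴ` for the block row `K = [M N]`.
theorem range_mulVecLin_le_range_add {A B : Matrix ι ι 𝕜} (hA : A.PosSemidef)
    (hB : B.PosSemidef) : LinearMap.range A.mulVecLin ≤ LinearMap.range (A + B).mulVecLin := by
  classical
  obtain ⟨M, rfl⟩ := CStarAlgebra.nonneg_iff_eq_mul_star_self.1 hA.nonneg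
  obtain ⟨N, rfl⟩ := CStarAlgebra.nonneg_iff_eq_mul_star_self.1 hB.nonneg
  have hK : M * Mᴴ + N * Nᴴ = fromCols M N * (fromCols M N)ᴴ := by
    rw [conjTranspose_fromCols_eq_fromRows_conjTranspose, fromCols_mul_fromRows]
  simp only [star_eq_conjTranspose]
  rw [hK, range_mulVecLin_mul_conjTranspose_self, range_mulVecLin_mul_conjTranspose_self]
  exact exists_mul_eq_iff_range_mulVecLin_le.1 ⟨fromRows 1 0, by simp [fromCols_mul_fromRows]⟩

theorem range_mulVecLin_le_of_le_smul {A B : Matrix ι ι 𝕜} {c : ℝ} (hB : B.PosSemidef)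
    (h : B ≤ c • A) : LinearMap.range B.mulVecLin ≤ LinearMap.range A.mulVecLin :=
  calc LinearMap.range B.mulVecLin ≤ LinearMap.range (B + (c • A - B)).mulVecLin :=
        range_mulVecLin_le_range_add hB h
    _ = LinearMap.range (c • A).mulVecLin := by rw [add_sub_cancel]
    _ ≤ LinearMap.range A.mulVecLin := by
        classical
        exact exists_mul_eq_iff_range_mulVecLin_le.1 ⟨c • 1, by simp⟩

/-- The face of the cone of positive semidefinite matrices cut out by a subspace `W`, consisting of
the matrices whose range lies in `W`. -/
def psdFace (W : Submodule 𝕜 (ι → 𝕜)) : Set (Matrix ι ι 𝕜) :=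
  {A | A.PosSemidef ∧ LinearMap.range A.mulVecLin ≤ W}

theorem convex_psdFace (W : Submodule 𝕜 (ι → 𝕜)) : Convex ℝ (psdFace W) := by
  rintro A ⟨hA, hAW⟩ B ⟨hB, hBW⟩ a b ha hb -
  refine ⟨(hA.smul ha).add (hB.smul hb), ?_⟩
  rintro _ ⟨v, rfl⟩
  simp only [mulVecLin_apply, add_mulVec, smul_mulVec]
  exact W.add_mem (W.smul_of_tower_mem a (hAW ⟨v, rfl⟩)) (W.smul_of_tower_mem b (hBW ⟨v, rfl⟩))

theorem range_mulVecLin_eq_of_mem_intrinsicInterior {W : Submodule 𝕜 (ι → 𝕜)} {A : Matrix ι ι 𝕜}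
    (hA : A ∈ intrinsicInterior ℝ (psdFace W)) : LinearMap.range A.mulVecLin = W := by
  refine (intrinsicInterior_subset hA).2.antisymm ?_
  obtain ⟨B, hB, rfl⟩ := exists_posSemidef_range_mulVecLin_eq W
  obtain ⟨C, ⟨hC, -⟩, a, b, ha, hb, -, rfl⟩ :=
    exists_mem_openSegment_of_mem_intrinsicInterior hA ⟨hB, le_rfl⟩
  refine range_mulVecLin_le_of_le_smul (c := a⁻¹) hB ?_
  rw [smul_add, inv_smul_smul₀ ha.ne', le_iff, add_sub_cancel_left]
  exact (hC.smul hb.le).smul (inv_pos.2 ha).le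

theorem exists_mem_openSegment_of_mem_psdFace {A B : Matrix ι ι 𝕜} (hA : A.PosSemidef)
    (hB : B ∈ psdFace (LinearMap.range A.mulVecLin)) :
    ∃ C ∈ psdFace (LinearMap.range A.mulVecLin), A ∈ openSegment ℝ B C := by
  obtain ⟨c, hc, hBc⟩ := exists_pos_le_smul_of_range_mulVecLin_le hA hB.1 hB.2
  have hpos : (A + c⁻¹ • (A - B)).PosSemidef := by
    have : A + c⁻¹ • (A - B) = c⁻¹ • (A + (c • A - B)) := by
      match_scalars <;> field_simp
      ring
    rw [this]
    exact (hA.add hBc).smul (inv_pos.2 hc).le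
  refine ⟨A + c⁻¹ • (A - B), ⟨hpos, range_mulVecLin_le_of_le_smul (c := 1 + c⁻¹) hpos ?_⟩,
    mem_openSegment_add_smul_sub A B (inv_pos.2 hc)⟩
  have : (1 + c⁻¹) • A - (A + c⁻¹ • (A - B)) = c⁻¹ • B := by module
  rw [le_iff, this]
  exact hB.1.smul (inv_pos.2 hc).le

theorem intrinsicInterior_psdFace (W : Submodule 𝕜 (ι → 𝕜)) :
    intrinsicInterior ℝ (psdFace W) = {A | A.PosSemidef ∧ LinearMap.range A.mulVecLin = W} := by
  refine Set.Subset.antisymm (fun A hA => ⟨(intrinsicInterior_subset hA).1,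
    range_mulVecLin_eq_of_mem_intrinsicInterior hA⟩) ?_
  rintro A ⟨hA, rfl⟩
  exact (mem_intrinsicInterior_iff_forall_exists_mem_openSegment (V := Matrix ι ι 𝕜)
    (convex_psdFace _)).2
    ⟨⟨hA, le_rfl⟩, fun B hB => exists_mem_openSegment_of_mem_psdFace hA hB⟩

end RangeOfPosSemidef

section PartialTranspose

variable {m n : ℕ}

/-- The partial transpose as a continuous real-linear involution. -/
noncomputable def partialTransposeCLE (m n : ℕ) :
    Matrix (Fin n × Fin m) (Fin n × Fin m) ℂ ≃L[ℝ] Matrix (Fin n × Fin m) (Fin n × Fin m) ℂ :=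
  (LinearEquiv.ofInvolutive
    { toFun := partialTranspose
      map_add' _ _ := rfl
      map_smul' _ _ := rfl } fun _ => rfl).toContinuousLinearEquiv

theorem image_partialTransposeCLE_PsiD (E : Submodule ℂ (Matrix (Fin m) (Fin n) ℂ)) :
    partialTransposeCLE m n '' PsiD E = PsiE E :=
  (partialTransposeCLE m n).image_eq_preimage_symm (PsiD E)

theorem convex_PsiD (D : Submodule ℂ (Matrix (Fin m) (Fin n) ℂ)) : Convex ℝ (PsiD D) :=
  convex_psdFace (D.map (vecL m n))

theorem convex_PsiE (E : Submodule ℂ (Matrix (Fin m) (Fin n) ℂ)) : Convex ℝ (PsiE E) :=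
  (convex_PsiD E).is_linear_preimage (f := partialTransposeCLE m n)
    (partialTransposeCLE m n).toLinearMap.isLinear

theorem intrinsicInterior_PsiD (D : Submodule ℂ (Matrix (Fin m) (Fin n) ℂ)) :
    intrinsicInterior ℝ (PsiD D) =
      {A | A.PosSemidef ∧ LinearMap.range A.mulVecLin = D.map (vecL m n)} :=
  intrinsicInterior_psdFace (D.map (vecL m n))

theorem intrinsicInterior_PsiE (E : Submodule ℂ (Matrix (Fin m) (Fin n) ℂ)) :
    intrinsicInterior ℝ (PsiE E) = {A | (partialTranspose A).PosSemidef ∧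
      LinearMap.range (partialTranspose A).mulVecLin = E.map (vecL m n)} := by
  rw [← image_partialTransposeCLE_PsiD]
  refine ((partialTransposeCLE m n).toContinuousAffineEquiv.intrinsicInterior_image (PsiD E)).trans
    ?_
  rw [intrinsicInterior_PsiD]
  exact (partialTransposeCLE m n).image_eq_preimage_symm _

theorem intrinsicInterior_PsiD_inter_PsiE (D E : Submodule ℂ (Matrix (Fin m) (Fin n) ℂ)) :
    intrinsicInterior ℝ (PsiD D) ∩ intrinsicInterior ℝ (PsiE E) =
      {A | A ∈ pptCone m n ∧ LinearMap.range A.mulVecLin = D.map (vecL m n) ∧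
        LinearMap.range (partialTranspose A).mulVecLin = E.map (vecL m n)} := by
  rw [intrinsicInterior_PsiD, intrinsicInterior_PsiE]
  exact Set.ext fun A => and_and_and_comm

theorem isIntersectionPair_iff_inter_nonempty (D E : Submodule ℂ (Matrix (Fin m) (Fin n) ℂ)) :
    IsIntersectionPair D E ↔
      (intrinsicInterior ℝ (PsiD D) ∩ intrinsicInterior ℝ (PsiE E)).Nonempty :=
  intrinsicInterior_inter_subset_iff (convex_PsiD D) (convex_PsiE E)

end PartialTranspose

/-- `(D,E)` is an intersection pair iff there is a PPT matrix `A` with range `D̃` whose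
partial transpose has range `Ẽ`; in that case the relative interior of `τ(D,E)` is
exactly the set of such matrices. -/
theorem intersectionPair_iff (m n : ℕ) (hm : 1 ≤ m) (hn : 1 ≤ n)
    (D E : Submodule ℂ (Matrix (Fin m) (Fin n) ℂ)) :
    (IsIntersectionPair D E ↔
      ∃ A ∈ pptCone m n, LinearMap.range A.mulVecLin = D.map (vecL m n) ∧
        LinearMap.range (partialTranspose A).mulVecLin = E.map (vecL m n)) ∧
    (IsIntersectionPair D E →
      intrinsicInterior ℝ (tauSet D E) =
        {A | A ∈ pptCone m n ∧ LinearMap.range A.mulVecLin = D.map (vecL m n) ∧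
          LinearMap.range (partialTranspose A).mulVecLin = E.map (vecL m n)}) := by
  rw [isIntersectionPair_iff_inter_nonempty, ← intrinsicInterior_PsiD_inter_PsiE]
  refine ⟨?_, intrinsicInterior_inter (convex_PsiD D) (convex_PsiE E)⟩
  rw [intrinsicInterior_PsiD_inter_PsiE]
  exact Iff.rfl
end

section
/- Let k ≥ 1, λ > 0, μ = 1/λ, and let ξ, η, ζ ∈ ℂ^k be unit vectors. Define the 9×9 Hermitian matrix X = X(ξ,η,ζ;λ) whose nonzero entries (rows and columns indexed 1,…,9) are: X₁₁ = X₅₅ = X₉₉ = X₁₅ = X₅₁ = X₁₉ = X₉₁ = X₅₉ = X₉₅ = 1; X₂₂ = X₆₆ = X₇₇ = λ²; X₃₃ = X₄₄ = X₈₈ = μ²; X₂₄ = ⟨η,ξ⟩ and X₄₂ = ⟨ξ,η⟩; X₃₇ = ⟨ζ,ξ⟩ and X₇₃ = ⟨ξ,ζ⟩; X₆₈ = ⟨ζ,η⟩ and X₈₆ = ⟨η,ζ⟩; all other entries are 0. Then X is positive semidefinite and the partial transpose X^τ is positive semidefinite; that is, X is a PPT matrix. -/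
open Matrix Complex
open scoped ComplexOrder

/-- The partial transpose of a `9 × 9` matrix viewed as a `3 × 3` array of `3 × 3`
blocks `B_{ij}`: the `(i,j)` block of `pt9 X` is `B_{ji}`. -/
def pt9 (X : Matrix (Fin 9) (Fin 9) ℂ) : Matrix (Fin 9) (Fin 9) ℂ :=
  Matrix.of fun i j =>
    X ⟨3 * ((j : ℕ) / 3) + (i : ℕ) % 3, by have := j.isLt; omega⟩
      ⟨3 * ((i : ℕ) / 3) + (j : ℕ) % 3, by have := i.isLt; omega⟩

/-- The inner product `⟨u, v⟩ = ∑ᵢ uᵢ conj(vᵢ)` on `ℂ^k`, linear in the first variable. -/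
noncomputable def ip {k : ℕ} (u v : Fin k → ℂ) : ℂ := ∑ i, u i * star (v i)

/-- The `9 × 9` matrix `X = X(ξ,η,ζ;λ)` (with `μ = 1/λ`). -/
noncomputable def Xgen {k : ℕ} (ξ η ζ : Fin k → ℂ) (lam mu : ℝ) : Matrix (Fin 9) (Fin 9) ℂ :=
  !![1, 0, 0, 0, 1, 0, 0, 0, 1;
     0, (lam : ℂ)^2, 0, ip η ξ, 0, 0, 0, 0, 0;
     0, 0, (mu : ℂ)^2, 0, 0, 0, ip ζ ξ, 0, 0;
     0, ip ξ η, 0, (mu : ℂ)^2, 0, 0, 0, 0, 0;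
     1, 0, 0, 0, 1, 0, 0, 0, 1;
     0, 0, 0, 0, 0, (lam : ℂ)^2, 0, ip ζ η, 0;
     0, 0, ip ξ ζ, 0, 0, 0, (lam : ℂ)^2, 0, 0;
     0, 0, 0, 0, 0, ip η ζ, 0, (mu : ℂ)^2, 0;
     1, 0, 0, 0, 1, 0, 0, 0, 1]

/-!
Label the basis vector `e_p ⊗ e_q` by the unordered pair `{p, q}`, merging the three labels with
`p = q`. Both `X` and its partial transpose are block diagonal for this labelling, and each block is
a Gram matrix. The `3 × 3` block of `X` is the Gram matrix of three copies of `ξ`, and a `2 × 2`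
block such as `[[λ², ⟨η, ξ⟩], [⟨ξ, η⟩, μ²]]` is that of `λη` and `μξ`, because `λμ = 1`. Partial
transposition moves the inner products into the `3 × 3` block, which becomes the Gram matrix of
`ξ, η, ζ`, and turns the `2 × 2` blocks into `[[λ², 1], [1, μ²]]` or `[[μ², 1], [1, λ²]]`, the Gram
matrices of `λξ` and `μξ`.
-/

section BlockGram

variable {ι β κ 𝕜 : Type*} [DecidableEq β] [Fintype κ] [RCLike 𝕜]

/-- The Gram matrix of the vectors `v i ∈ 𝕜^κ` (inner product linear in the first variable) with
the entries between differently labelled indices replaced by `0`; up to a permutation of `ι`, a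
direct sum of Gram matrices, one for each label. -/
def blockGram (b : ι → β) (v : ι → κ → 𝕜) : Matrix ι ι 𝕜 :=
  Matrix.of fun i j => if b i = b j then v i ⬝ᵥ star (v j) else 0

theorem blockGram_eq_hadamard (b : ι → β) (v : ι → κ → 𝕜) :
    blockGram b v = (1 : Matrix β β 𝕜).submatrix b b ⊙ (Matrix.of v * (Matrix.of v)ᴴ) := by
  ext i j
  simp [blockGram, Matrix.one_apply, Matrix.mul_apply, dotProduct]

theorem blockGram_posSemidef [Finite ι] (b : ι → β) (v : ι → κ → 𝕜) :
    (blockGram b v).PosSemidef := by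
  rw [blockGram_eq_hadamard]
  exact (PosSemidef.one.submatrix b).hadamard (posSemidef_self_mul_conjTranspose (Matrix.of v))

end BlockGram

theorem pt9_apply_finProdFinEquiv (X : Matrix (Fin 9) (Fin 9) ℂ) (p q r s : Fin 3) :
    pt9 X (finProdFinEquiv (p, q)) (finProdFinEquiv (r, s)) =
      X (finProdFinEquiv (r, q)) (finProdFinEquiv (p, s)) := by
  simp only [pt9, Matrix.of_apply]
  congr 1 <;> ext <;> simp only [finProdFinEquiv_apply_val] <;> omega

/-- The labels of the blocks common to `Xgen` and its partial transpose: the index `3 * p + q` is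
labelled by the unordered pair `{p, q}`, where `0` stands for `p = q` and `1`, `2`, `3` for
`{0, 1}`, `{0, 2}`, `{1, 2}`. -/
def pairLabel : Fin 9 → Fin 4 := ![0, 1, 2, 1, 0, 3, 2, 3, 0]

section Xgen

variable {k : ℕ} {ξ η ζ : Fin k → ℂ} {lam mu : ℝ}

theorem ip_eq_dotProduct_star (u v : Fin k → ℂ) : ip u v = u ⬝ᵥ star v := rfl

theorem Xgen_eq_blockGram (hlm : lam * mu = 1) (hξ : ip ξ ξ = 1) (hη : ip η η = 1)
    (hζ : ip ζ ζ = 1) :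
    Xgen ξ η ζ lam mu = blockGram pairLabel
      ![ξ, (lam : ℂ) • η, (mu : ℂ) • ζ, (mu : ℂ) • ξ, ξ, (lam : ℂ) • ζ, (lam : ℂ) • ξ,
        (mu : ℂ) • η, ξ] := by
  have hlm' : (lam : ℂ) * mu = 1 := mod_cast hlm
  have hml' : (mu : ℂ) * lam = 1 := by rw [mul_comm, hlm']
  simp only [ip_eq_dotProduct_star] at hξ hη hζ
  ext i j
  fin_cases i <;> fin_cases j <;>
    simp [Xgen, blockGram, pairLabel, ip_eq_dotProduct_star, ← mul_assoc, hlm', hml', hξ, hη, hζ,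
      pow_two]

theorem pt9_Xgen :
    pt9 (Xgen ξ η ζ lam mu) =
      !![1, 0, 0, 0, ip ξ η, 0, 0, 0, ip ξ ζ;
         0, (lam : ℂ)^2, 0, 1, 0, 0, 0, 0, 0;
         0, 0, (mu : ℂ)^2, 0, 0, 0, 1, 0, 0;
         0, 1, 0, (mu : ℂ)^2, 0, 0, 0, 0, 0;
         ip η ξ, 0, 0, 0, 1, 0, 0, 0, ip η ζ;
         0, 0, 0, 0, 0, (lam : ℂ)^2, 0, 1, 0;
         0, 0, 1, 0, 0, 0, (lam : ℂ)^2, 0, 0;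
         0, 0, 0, 0, 0, 1, 0, (mu : ℂ)^2, 0;
         ip ζ ξ, 0, 0, 0, ip ζ η, 0, 0, 0, 1] := by
  ext i j
  obtain ⟨⟨p, q⟩, rfl⟩ := (finProdFinEquiv (m := 3) (n := 3)).surjective i
  obtain ⟨⟨r, s⟩, rfl⟩ := (finProdFinEquiv (m := 3) (n := 3)).surjective j
  rw [pt9_apply_finProdFinEquiv]
  fin_cases p <;> fin_cases q <;> fin_cases r <;> fin_cases s <;> simp [Xgen, finProdFinEquiv]

theorem pt9_Xgen_eq_blockGram (hlm : lam * mu = 1) (hξ : ip ξ ξ = 1) (hη : ip η η = 1)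
    (hζ : ip ζ ζ = 1) :
    pt9 (Xgen ξ η ζ lam mu) = blockGram pairLabel
      ![ξ, (lam : ℂ) • ξ, (mu : ℂ) • ξ, (mu : ℂ) • ξ, η, (lam : ℂ) • ξ, (lam : ℂ) • ξ,
        (mu : ℂ) • ξ, ζ] := by
  have hlm' : (lam : ℂ) * mu = 1 := mod_cast hlm
  have hml' : (mu : ℂ) * lam = 1 := by rw [mul_comm, hlm']
  simp only [ip_eq_dotProduct_star] at hξ hη hζ
  rw [pt9_Xgen]
  ext i j
  fin_cases i <;> fin_cases j <;>
    simp [blockGram, pairLabel, ip_eq_dotProduct_star, hlm', hml', hξ, hη, hζ, pow_two]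

end Xgen

/-- For unit vectors `ξ, η, ζ` and `λ > 0`, `μ = 1/λ`, the matrix `X(ξ,η,ζ;λ)` and its
partial transpose are positive semidefinite, i.e. `X` is a PPT matrix. -/
theorem Xgen_isPPT (k : ℕ) (hk : 1 ≤ k) (lam mu : ℝ) (hlam : 0 < lam) (hmu : mu = 1 / lam)
    (ξ η ζ : Fin k → ℂ) (hξ : ip ξ ξ = 1) (hη : ip η η = 1) (hζ : ip ζ ζ = 1) :
    (Xgen ξ η ζ lam mu).PosSemidef ∧ (pt9 (Xgen ξ η ζ lam mu)).PosSemidef := by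
  have hlm : lam * mu = 1 := by rw [hmu, mul_one_div_cancel hlam.ne']
  constructor
  · rw [Xgen_eq_blockGram hlm hξ hη hζ]
    exact blockGram_posSemidef _ _
  · rw [pt9_Xgen_eq_blockGram hlm hξ hη hζ]
    exact blockGram_posSemidef _ _
end

section
/- Let k ≥ 1, λ > 0, μ = 1/λ, let ξ, η, ζ ∈ ℂ^k be unit vectors, and let X = X(ξ,η,ζ;λ) be the 9×9 matrix with nonzero entries X₁₁ = X₅₅ = X₉₉ = X₁₅ = X₅₁ = X₁₉ = X₉₁ = X₅₉ = X₉₅ = 1; X₂₂ = X₆₆ = X₇₇ = λ²; X₃₃ = X₄₄ = X₈₈ = μ²; X₂₄ = ⟨η,ξ⟩, X₄₂ = ⟨ξ,η⟩; X₃₇ = ⟨ζ,ξ⟩, X₇₃ = ⟨ξ,ζ⟩; X₆₈ = ⟨ζ,η⟩, X₈₆ = ⟨η,ζ⟩ (all other entries 0). Then the rank of X equals 1 + rank G(ξ,η) + rank G(η,ζ) + rank G(ζ,ξ), where G(u,v) denotes the 2×2 Gram matrix [[⟨u,u⟩, ⟨u,v⟩],[⟨v,u⟩, ⟨v,v⟩]].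 -/
open Matrix Complex
open scoped ComplexOrder

/-- The `2 × 2` Gram matrix of `u, v`. -/
noncomputable def gram2 {k : ℕ} (u v : Fin k → ℂ) : Matrix (Fin 2) (Fin 2) ℂ :=
  !![ip u u, ip u v; ip v u, ip v v]

/-!
After the simultaneous permutation of rows and columns that groups `eᵢ ⊗ eⱼ` with `eⱼ ⊗ eᵢ`,
the matrix `X` is block diagonal: one `3 × 3` block of ones, of rank `1`, and three `2 × 2` blocks
`!![λ², ⟨v, u⟩; ⟨u, v⟩, μ²]`. Since `λμ = 1` and `u`, `v` are unit vectors, such a block is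
`D * (G(u, v))ᵀ * D` with `D = diag(λ, μ)` invertible, so it has the rank of `G(u, v)`.
-/

section RankOfBlockMatrices

variable {K m m' n n' : Type*} [Fintype n] [Fintype n']

lemma finrank_range_prodMap {V V' W W' : Type*} [DivisionRing K]
    [AddCommGroup V] [AddCommGroup V'] [AddCommGroup W] [AddCommGroup W']
    [Module K V] [Module K V'] [Module K W] [Module K W']
    (f : V →ₗ[K] V') (g : W →ₗ[K] W')
    [FiniteDimensional K f.range] [FiniteDimensional K g.range] :
    Module.finrank K (f.prodMap g).range = Module.finrank K f.range + Module.finrank K g.range := by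
  have hinj : Function.Injective (f.range.subtype.prodMap g.range.subtype) :=
    f.range.subtype_injective.prodMap g.range.subtype_injective
  have hrange : (f.prodMap g).range = (f.range.subtype.prodMap g.range.subtype).range := by
    simp only [LinearMap.range_prodMap, Submodule.range_subtype]
  rw [hrange, LinearMap.finrank_range_of_inj hinj, Module.finrank_prod]

lemma mulVecLin_fromBlocks_zero₁₂_zero₂₁ [CommSemiring K] (A : Matrix m n K)
    (D : Matrix m' n' K) :
    (fromBlocks A 0 0 D).mulVecLin =
      (LinearEquiv.sumArrowLequivProdArrow m m' K K).symm.toLinearMap ∘ₗ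
        A.mulVecLin.prodMap D.mulVecLin ∘ₗ
          (LinearEquiv.sumArrowLequivProdArrow n n' K K).toLinearMap := by
  refine LinearMap.ext fun x => funext fun i => ?_
  rcases i with i | i <;>
  · simp only [mulVecLin_apply, fromBlocks_mulVec, zero_mulVec, add_zero, zero_add]
    rfl

lemma rank_fromBlocks_zero₁₂_zero₂₁ [Field K] (A : Matrix m n K) (D : Matrix m' n' K) :
    (fromBlocks A 0 0 D).rank = A.rank + D.rank := by
  rw [Matrix.rank, mulVecLin_fromBlocks_zero₁₂_zero₂₁, LinearMap.range_comp,
    LinearEquiv.finrank_map_eq, LinearMap.range_comp_of_range_eq_top _ (LinearEquiv.range _),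
    finrank_range_prodMap, Matrix.rank, Matrix.rank]

end RankOfBlockMatrices

lemma rank_vecMulVec_of_ne_zero {R m n : Type*} [CommRing R] [IsDomain R] [Fintype n]
    {w : m → R} {v : n → R} (hw : w ≠ 0) (hv : v ≠ 0) : (vecMulVec w v).rank = 1 := by
  obtain ⟨i, hi⟩ := Function.ne_iff.mp hw
  obtain ⟨j, hj⟩ := Function.ne_iff.mp hv
  refine le_antisymm (rank_vecMulVec_le w v) ?_
  have hdet : ((vecMulVec w v).submatrix (fun _ : Unit => i) (fun _ : Unit => j)).det ≠ 0 := by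
    simpa [vecMulVec_apply] using ⟨hi, hj⟩
  simpa [rank_of_det_ne_zero hdet] using
    rank_submatrix_le (vecMulVec w v) (fun _ : Unit => i) (fun _ : Unit => j)

lemma rank_fin_two_rescale_diag {R : Type*} [CommRing R] {p q : R} (hpq : p * q = 1) (a b c d : R) :
    !![p ^ 2 * a, b; c, q ^ 2 * d].rank = !![a, b; c, d].rank := by
  have hdet : IsUnit !![p, 0; 0, q].det := by simp [det_fin_two_of, hpq]
  have hb : p * b * q = b := by linear_combination b * hpq
  have hc : q * c * p = c := by linear_combination c * hpq
  have hfactor : !![p ^ 2 * a, b; c, q ^ 2 * d] =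
      !![p, 0; 0, q] * !![a, b; c, d] * !![p, 0; 0, q] := by
    simp only [mul_fin_two, mul_zero, zero_mul, add_zero, zero_add, hb, hc, mul_right_comm _ _ p,
      mul_right_comm _ _ q, sq]
  rw [hfactor, rank_mul_eq_left_of_isUnit_det _ _ hdet, rank_mul_eq_right_of_isUnit_det _ _ hdet]

/-- For unit vectors `u, v`, the transposed Gram matrix of `u, v` with its diagonal rescaled to
`p², q²`. At `(p, q) = (λ, μ)` and with `(u, v)` running cyclically through `(ξ, η)`, `(η, ζ)`,
`(ζ, ξ)`, these are the three `2 × 2` blocks of `X(ξ,η,ζ;λ)`. -/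
noncomputable def gramBlock {k : ℕ} (u v : Fin k → ℂ) (p q : ℂ) : Matrix (Fin 2) (Fin 2) ℂ :=
  !![p ^ 2, ip v u; ip u v, q ^ 2]

lemma rank_gramBlock {k : ℕ} {u v : Fin k → ℂ} {p q : ℂ} (hpq : p * q = 1)
    (hu : ip u u = 1) (hv : ip v v = 1) : (gramBlock u v p q).rank = (gram2 u v).rank := by
  have htranspose : (gram2 u v)ᵀ = !![ip u u, ip v u; ip u v, ip v v] := eta_fin_two _
  have hblock : gramBlock u v p q = !![p ^ 2 * ip u u, ip v u; ip u v, q ^ 2 * ip v v] := by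
    rw [gramBlock, hu, hv, mul_one, mul_one]
  rw [hblock, rank_fin_two_rescale_diag hpq, ← htranspose, rank_transpose]

/-- The reordering of the standard basis of `ℂ³ ⊗ ℂ³`, where `eᵢ ⊗ eⱼ` has position `3i + j`, that
puts `X` in block diagonal form: first the `eᵢ ⊗ eᵢ`, then, for each `(i, j) = (0, 1), (1, 2),
(2, 0)`, the pair `eᵢ ⊗ eⱼ`, `eⱼ ⊗ eᵢ`. -/
noncomputable def tensorBasisEquiv : Fin 3 ⊕ Fin 2 ⊕ Fin 2 ⊕ Fin 2 ≃ Fin 9 :=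
  Equiv.ofBijective (Sum.elim ![0, 4, 8] (Sum.elim ![1, 3] (Sum.elim ![5, 7] ![6, 2]))) <| by
    constructor
    · unfold Function.Injective; decide
    · unfold Function.Surjective; decide

lemma Xgen_submatrix_tensorBasisEquiv {k : ℕ} (ξ η ζ : Fin k → ℂ) (lam mu : ℝ) :
    (Xgen ξ η ζ lam mu).submatrix tensorBasisEquiv tensorBasisEquiv =
      fromBlocks (vecMulVec 1 1) 0 0
        (fromBlocks (gramBlock ξ η lam mu) 0 0
          (fromBlocks (gramBlock η ζ lam mu) 0 0 (gramBlock ζ ξ lam mu))) := by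
  ext i j
  rcases i with i | i | i | i <;> rcases j with j | j | j | j <;>
    fin_cases i <;> fin_cases j <;> first | rfl | exact (mul_one 1).symm

/-- `rank X = 1 + rank G(ξ,η) + rank G(η,ζ) + rank G(ζ,ξ)`. -/
theorem Xgen_rank (k : ℕ) (hk : 1 ≤ k) (lam mu : ℝ) (hlam : 0 < lam) (hmu : mu = 1 / lam)
    (ξ η ζ : Fin k → ℂ) (hξ : ip ξ ξ = 1) (hη : ip η η = 1) (hζ : ip ζ ζ = 1) :
    (Xgen ξ η ζ lam mu).rank =
      1 + (gram2 ξ η).rank + (gram2 η ζ).rank + (gram2 ζ ξ).rank := by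
  have hlm : (lam : ℂ) * mu = 1 := by
    rw [hmu, ← ofReal_mul, mul_one_div_cancel hlam.ne', ofReal_one]
  rw [← rank_submatrix (Xgen ξ η ζ lam mu) tensorBasisEquiv tensorBasisEquiv,
    Xgen_submatrix_tensorBasisEquiv]
  simp only [rank_fromBlocks_zero₁₂_zero₂₁]
  rw [rank_vecMulVec_of_ne_zero one_ne_zero one_ne_zero, rank_gramBlock hlm hξ hη,
    rank_gramBlock hlm hη hζ, rank_gramBlock hlm hζ hξ]
  ring
end

section
/- Let λ > 0, λ ≠ 1, μ = 1/λ, and in ℂ³ take ξ = e₁, η = e₂, ζ = e₁. Let X be the 9×9 matrix with nonzero entries X₁₁ = X₅₅ = X₉₉ = X₁₅ = X₅₁ = X₁₉ = X₉₁ = X₅₉ = X₉₅ = 1; X₂₂ = X₆₆ = X₇₇ = λ²; X₃₃ = X₄₄ = X₈₈ = μ²; X₃₇ = X₇₃ = 1 (all other entries 0). Then X and its partial transpose X^τ are positive semidefinite, rank X = 6, and rank X^τ = 5. -/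
/-!
Both matrices are Gram matrices `Bᴴ * B`, hence positive semidefinite, where the rows of `B` are
nonzero vectors with pairwise disjoint supports, so that the rank is the number of rows. Since
`λ * μ = 1`, each `2 × 2` principal block with diagonal entries `λ²`, `μ²` and off-diagonal
entries `1` is the rank-one Gram matrix of `(λ, μ)` and accounts for a single row. There is one
such block in `X`, next to the `3 × 3` block of ones and four diagonal entries; in the partial
transpose there are three, next to a `2 × 2` block of ones and one diagonal entry.
-/

open Matrix Complex
open scoped ComplexOrder

/-- The matrix `X(e₁, e₂, e₁; λ)` (with `μ = 1/λ`): here `⟨ζ,ξ⟩ = ⟨ξ,ζ⟩ = 1` and the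
other off-diagonal inner products vanish. -/
def X12 (lam mu : ℝ) : Matrix (Fin 9) (Fin 9) ℂ :=
  !![1, 0, 0, 0, 1, 0, 0, 0, 1;
     0, (lam : ℂ)^2, 0, 0, 0, 0, 0, 0, 0;
     0, 0, (mu : ℂ)^2, 0, 0, 0, 1, 0, 0;
     0, 0, 0, (mu : ℂ)^2, 0, 0, 0, 0, 0;
     1, 0, 0, 0, 1, 0, 0, 0, 1;
     0, 0, 0, 0, 0, (lam : ℂ)^2, 0, 0, 0;
     0, 0, 1, 0, 0, 0, (lam : ℂ)^2, 0, 0;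
     0, 0, 0, 0, 0, 0, 0, (mu : ℂ)^2, 0;
     1, 0, 0, 0, 1, 0, 0, 0, 1]

theorem rank_eq_card_of_isDiag_mul_conjTranspose {m n K : Type*} [Fintype m] [Fintype n] [Field K]
    [PartialOrder K] [StarRing K] [StarOrderedRing K] {B : Matrix m n K}
    (hdiag : (B * Bᴴ).IsDiag) (hrow : ∀ i, B i ≠ 0) : B.rank = Fintype.card m := by
  classical
  have hnorm (i : m) : (B * Bᴴ) i i ≠ 0 := fun h => hrow i (dotProduct_self_star_eq_zero.mp h)
  rw [← rank_self_mul_conjTranspose, ← hdiag.diagonal_diag, rank_diagonal]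
  simp [hnorm]

theorem pt9_X12 (lam mu : ℝ) :
    pt9 (X12 lam mu) =
      !![1, 0, 0, 0, 0, 0, 0, 0, 1;
         0, (lam : ℂ)^2, 0, 1, 0, 0, 0, 0, 0;
         0, 0, (mu : ℂ)^2, 0, 0, 0, 1, 0, 0;
         0, 1, 0, (mu : ℂ)^2, 0, 0, 0, 0, 0;
         0, 0, 0, 0, 1, 0, 0, 0, 0;
         0, 0, 0, 0, 0, (lam : ℂ)^2, 0, 1, 0;
         0, 0, 1, 0, 0, 0, (lam : ℂ)^2, 0, 0;
         0, 0, 0, 0, 0, 1, 0, (mu : ℂ)^2, 0;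
         1, 0, 0, 0, 0, 0, 0, 0, 1] :=
  -- Every entry of the expansion of the left-hand side reduces to the literal on the right.
  (etaExpand_eq _).symm

/-- A matrix `B` with `X12 lam mu = Bᴴ * B` when `lam * mu = 1`, with one row for each
irreducible diagonal block of `X12 lam mu`. -/
def gramFactorX12 (lam mu : ℝ) : Matrix (Fin 6) (Fin 9) ℂ :=
  !![1, 0, 0, 0, 1, 0, 0, 0, 1;
     0, lam, 0, 0, 0, 0, 0, 0, 0;
     0, 0, mu, 0, 0, 0, lam, 0, 0;
     0, 0, 0, mu, 0, 0, 0, 0, 0;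
     0, 0, 0, 0, 0, lam, 0, 0, 0;
     0, 0, 0, 0, 0, 0, 0, mu, 0]

/-- The analogue of `gramFactorX12` for the partial transpose `pt9 (X12 lam mu)`. -/
def gramFactorPt9X12 (lam mu : ℝ) : Matrix (Fin 5) (Fin 9) ℂ :=
  !![1, 0, 0, 0, 0, 0, 0, 0, 1;
     0, lam, 0, mu, 0, 0, 0, 0, 0;
     0, 0, mu, 0, 0, 0, lam, 0, 0;
     0, 0, 0, 0, 1, 0, 0, 0, 0;
     0, 0, 0, 0, 0, lam, 0, mu, 0]

section

variable {lam mu : ℝ}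

theorem X12_eq_conjTranspose_mul_gramFactorX12 (h : lam * mu = 1) :
    X12 lam mu = (gramFactorX12 lam mu)ᴴ * gramFactorX12 lam mu := by
  have hlm : (lam : ℂ) * mu = 1 := mod_cast h
  have hml : (mu : ℂ) * lam = 1 := by rwa [mul_comm]
  ext i j
  fin_cases i <;> fin_cases j <;>
    simp [X12, gramFactorX12, mul_apply, Fin.sum_univ_succ, hlm, hml, sq]

theorem pt9_X12_eq_conjTranspose_mul_gramFactorPt9X12 (h : lam * mu = 1) :
    pt9 (X12 lam mu) = (gramFactorPt9X12 lam mu)ᴴ * gramFactorPt9X12 lam mu := by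
  have hlm : (lam : ℂ) * mu = 1 := mod_cast h
  have hml : (mu : ℂ) * lam = 1 := by rwa [mul_comm]
  rw [pt9_X12]
  ext i j
  fin_cases i <;> fin_cases j <;>
    simp [gramFactorPt9X12, mul_apply, Fin.sum_univ_succ, hlm, hml, sq]

theorem isDiag_gramFactorX12_mul_conjTranspose :
    (gramFactorX12 lam mu * (gramFactorX12 lam mu)ᴴ).IsDiag := by
  intro i j hij
  fin_cases i <;> fin_cases j <;>
    first
    | exact absurd rfl hij
    | simp [gramFactorX12, mul_apply, Fin.sum_univ_succ]

theorem isDiag_gramFactorPt9X12_mul_conjTranspose :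
    (gramFactorPt9X12 lam mu * (gramFactorPt9X12 lam mu)ᴴ).IsDiag := by
  intro i j hij
  fin_cases i <;> fin_cases j <;>
    first
    | exact absurd rfl hij
    | simp [gramFactorPt9X12, mul_apply, Fin.sum_univ_succ]

theorem rank_gramFactorX12 (hlam : lam ≠ 0) (hmu : mu ≠ 0) : (gramFactorX12 lam mu).rank = 6 := by
  have hpivot (i : Fin 6) : gramFactorX12 lam mu i (![0, 1, 2, 3, 5, 7] i) ≠ 0 := by
    fin_cases i <;> simp [gramFactorX12, hlam, hmu]
  exact rank_eq_card_of_isDiag_mul_conjTranspose isDiag_gramFactorX12_mul_conjTranspose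
    fun i => Function.ne_iff.mpr ⟨_, hpivot i⟩

theorem rank_gramFactorPt9X12 (hlam : lam ≠ 0) (hmu : mu ≠ 0) :
    (gramFactorPt9X12 lam mu).rank = 5 := by
  have hpivot (i : Fin 5) : gramFactorPt9X12 lam mu i (![0, 1, 2, 4, 5] i) ≠ 0 := by
    fin_cases i <;> simp [gramFactorPt9X12, hlam, hmu]
  exact rank_eq_card_of_isDiag_mul_conjTranspose isDiag_gramFactorPt9X12_mul_conjTranspose
    fun i => Function.ne_iff.mpr ⟨_, hpivot i⟩

end

theorem X12_ppt_rank_general (lam mu : ℝ) (h : lam * mu = 1) :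
    (X12 lam mu).PosSemidef ∧ (pt9 (X12 lam mu)).PosSemidef ∧
      (X12 lam mu).rank = 6 ∧ (pt9 (X12 lam mu)).rank = 5 := by
  have hlam : lam ≠ 0 := left_ne_zero_of_mul_eq_one h
  have hmu : mu ≠ 0 := right_ne_zero_of_mul_eq_one h
  rw [pt9_X12_eq_conjTranspose_mul_gramFactorPt9X12 h, X12_eq_conjTranspose_mul_gramFactorX12 h,
    rank_conjTranspose_mul_self, rank_conjTranspose_mul_self]
  exact ⟨posSemidef_conjTranspose_mul_self _, posSemidef_conjTranspose_mul_self _,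
    rank_gramFactorX12 hlam hmu, rank_gramFactorPt9X12 hlam hmu⟩

/-- With `ξ = e₁, η = e₂, ζ = e₁`: `X` is PPT with `rank X = 6` and `rank X^τ = 5`
(a `(6,5)` edge state). -/
theorem X12_ppt_rank (lam mu : ℝ) (h0 : 0 < lam) (h1 : lam ≠ 1) (hmu : mu = 1 / lam) :
    (X12 lam mu).PosSemidef ∧ (pt9 (X12 lam mu)).PosSemidef ∧
      (X12 lam mu).rank = 6 ∧ (pt9 (X12 lam mu)).rank = 5 :=
  X12_ppt_rank_general lam mu (hmu ▸ mul_one_div_cancel h0.ne')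
end

section
/- Let λ > 0, λ ≠ 1, μ = 1/λ, and take ξ = η = ζ = e₁ in ℂ³. Let X be the 9×9 matrix with nonzero entries X₁₁ = X₅₅ = X₉₉ = X₁₅ = X₅₁ = X₁₉ = X₉₁ = X₅₉ = X₉₅ = 1; X₂₂ = X₆₆ = X₇₇ = λ²; X₃₃ = X₄₄ = X₈₈ = μ²; X₂₄ = X₄₂ = X₃₇ = X₇₃ = X₆₈ = X₈₆ = 1 (all other entries 0). Then X and its partial transpose X^τ are positive semidefinite, rank X = 4, and rank X^τ = 4. -/
open Matrix Complex
open scoped ComplexOrder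

/-- The matrix `X(e₁, e₁, e₁; λ)` (with `μ = 1/λ`): all the inner products
`⟨η,ξ⟩, ⟨ζ,ξ⟩, ⟨ζ,η⟩` equal `1`. -/
def X13 (lam mu : ℝ) : Matrix (Fin 9) (Fin 9) ℂ :=
  !![1, 0, 0, 0, 1, 0, 0, 0, 1;
     0, (lam : ℂ)^2, 0, 1, 0, 0, 0, 0, 0;
     0, 0, (mu : ℂ)^2, 0, 0, 0, 1, 0, 0;
     0, 1, 0, (mu : ℂ)^2, 0, 0, 0, 0, 0;
     1, 0, 0, 0, 1, 0, 0, 0, 1;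
     0, 0, 0, 0, 0, (lam : ℂ)^2, 0, 1, 0;
     0, 0, 1, 0, 0, 0, (lam : ℂ)^2, 0, 0;
     0, 0, 0, 0, 0, 1, 0, (mu : ℂ)^2, 0;
     1, 0, 0, 0, 1, 0, 0, 0, 1]

/-!
Identify `ℂ⁹` with `ℂ³ ⊗ ℂ³`. When `λμ = 1`, the matrix `X` is the Gram matrix `Aᴴ A` of the
columns of the `4 × 9` matrix `A` with rows
`e₁⊗e₁ + e₂⊗e₂ + e₃⊗e₃`, `λ e₁⊗e₂ + μ e₂⊗e₁`, `μ e₁⊗e₃ + λ e₃⊗e₁`, `λ e₂⊗e₃ + μ e₃⊗e₂`,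
so `X` is positive semidefinite. The rows have disjoint supports, hence `A Aᴴ` is diagonal and
invertible, which gives `A`, and with it `Aᴴ A`, rank `4`. Finally `X` is its own partial
transpose.
-/

theorem rank_eq_card_of_isUnit_mul {R m n : Type*} [CommSemiring R] [StrongRankCondition R]
    [Fintype m] [DecidableEq m] [Fintype n] {A : Matrix m n R} {B : Matrix n m R}
    (h : IsUnit (A * B)) : A.rank = Fintype.card m :=
  le_antisymm A.rank_le_card_height (rank_of_isUnit _ h ▸ rank_mul_le_left A B)

theorem pt9_X13 (lam mu : ℝ) : pt9 (X13 lam mu) = X13 lam mu := by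
  ext i j
  fin_cases i <;> fin_cases j <;> rfl

/-- The Gram factor `A` of `X13`, for which `X13 = Aᴴ * A` when `lam * mu = 1`. -/
def X13Factor (lam mu : ℝ) : Matrix (Fin 4) (Fin 9) ℂ :=
  !![1, 0, 0, 0, 1, 0, 0, 0, 1;
     0, (lam : ℂ), 0, (mu : ℂ), 0, 0, 0, 0, 0;
     0, 0, (mu : ℂ), 0, 0, 0, (lam : ℂ), 0, 0;
     0, 0, 0, 0, 0, (lam : ℂ), 0, (mu : ℂ), 0]

theorem X13_eq_conjTranspose_mul_self {lam mu : ℝ} (h : lam * mu = 1) :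
    X13 lam mu = (X13Factor lam mu)ᴴ * X13Factor lam mu := by
  have hlm : (lam : ℂ) * mu = 1 := mod_cast h
  have hml : (mu : ℂ) * lam = 1 := mul_comm (mu : ℂ) lam ▸ hlm
  ext i j
  fin_cases i <;> fin_cases j <;>
    simp [X13, X13Factor, mul_apply, Fin.sum_univ_four, hlm, hml, sq]

theorem X13Factor_mul_conjTranspose_self (lam mu : ℝ) :
    X13Factor lam mu * (X13Factor lam mu)ᴴ =
      diagonal ![3, (lam : ℂ) ^ 2 + (mu : ℂ) ^ 2, (lam : ℂ) ^ 2 + (mu : ℂ) ^ 2,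
        (lam : ℂ) ^ 2 + (mu : ℂ) ^ 2] := by
  ext i j
  fin_cases i <;> fin_cases j <;>
    simp [X13Factor, mul_apply, Fin.sum_univ_succ] <;> ring

theorem rank_X13Factor {lam mu : ℝ} (h : lam ^ 2 + mu ^ 2 ≠ 0) :
    (X13Factor lam mu).rank = 4 := by
  have hC : (lam : ℂ) ^ 2 + (mu : ℂ) ^ 2 ≠ 0 := mod_cast h
  have hunit : IsUnit (X13Factor lam mu * (X13Factor lam mu)ᴴ) := by
    rw [X13Factor_mul_conjTranspose_self, isUnit_diagonal, Pi.isUnit_iff]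
    simp [Fin.forall_fin_succ, hC]
  simpa using rank_eq_card_of_isUnit_mul hunit

theorem posSemidef_X13 {lam mu : ℝ} (h : lam * mu = 1) : (X13 lam mu).PosSemidef :=
  X13_eq_conjTranspose_mul_self h ▸ posSemidef_conjTranspose_mul_self _

theorem rank_X13 {lam mu : ℝ} (h : lam * mu = 1) : (X13 lam mu).rank = 4 := by
  have hsum : lam ^ 2 + mu ^ 2 ≠ 0 := by nlinarith [sq_nonneg (lam - mu)]
  rw [X13_eq_conjTranspose_mul_self h, rank_conjTranspose_mul_self, rank_X13Factor hsum]

/-- With `ξ = η = ζ = e₁`: `X` is PPT with `rank X = 4` and `rank X^τ = 4`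
(a `(4,4)` edge state). -/
theorem X13_ppt_rank (lam mu : ℝ) (h0 : 0 < lam) (h1 : lam ≠ 1) (hmu : mu = 1 / lam) :
    (X13 lam mu).PosSemidef ∧ (pt9 (X13 lam mu)).PosSemidef ∧
      (X13 lam mu).rank = 4 ∧ (pt9 (X13 lam mu)).rank = 4 := by
  have h : lam * mu = 1 := hmu ▸ mul_one_div_cancel h0.ne'
  rw [pt9_X13]
  exact ⟨posSemidef_X13 h, posSemidef_X13 h, rank_X13 h, rank_X13 h⟩
end

section
/- Let t > 1 be real, λ > 0, λ ≠ 1, μ = 1/λ. Define the 9×9 real symmetric matrix X_t whose nonzero entries (rows and columns indexed 1,…,9) are: X₁₁ = X₅₅ = t; X₉₉ = 2/(t+1); X₁₅ = X₅₁ = X₁₉ = X₉₁ = X₅₉ = X₉₅ = 1; X₂₂ = X₆₆ = X₇₇ = λ²; X₃₃ = X₄₄ = X₈₈ = μ²; X₃₇ = X₇₃ = X₆₈ = X₈₆ = √(t/(t+1)); all other entries are 0. Then X_t and its partial transpose X_t^τ are positive semidefinite, rank X_t = 8, and rank X_t^τ = 5. -/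
open Matrix Complex
open scoped ComplexOrder

/-- The `9 × 9` matrix `X_t` (with parameters `t > 1`, `λ > 0`, `μ = 1/λ`). -/
noncomputable def Xt (t lam mu : ℝ) : Matrix (Fin 9) (Fin 9) ℂ :=
  !![(t : ℂ), 0, 0, 0, 1, 0, 0, 0, 1;
     0, (lam : ℂ)^2, 0, 0, 0, 0, 0, 0, 0;
     0, 0, (mu : ℂ)^2, 0, 0, 0, ((Real.sqrt (t / (t + 1)) : ℝ) : ℂ), 0, 0;
     0, 0, 0, (mu : ℂ)^2, 0, 0, 0, 0, 0;
     1, 0, 0, 0, (t : ℂ), 0, 0, 0, 1;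
     0, 0, 0, 0, 0, (lam : ℂ)^2, 0, ((Real.sqrt (t / (t + 1)) : ℝ) : ℂ), 0;
     0, 0, ((Real.sqrt (t / (t + 1)) : ℝ) : ℂ), 0, 0, 0, (lam : ℂ)^2, 0, 0;
     0, 0, 0, 0, 0, ((Real.sqrt (t / (t + 1)) : ℝ) : ℂ), 0, (mu : ℂ)^2, 0;
     1, 0, 0, 0, 1, 0, 0, 0, ((2 / (t + 1) : ℝ) : ℂ)]

/-
Up to a permutation of the basis, both `X_t` and its partial transpose are direct sums of one
`3 × 3` block and three `2 × 2` blocks, and partial transposition merely exchanges the off-diagonal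
entries of the `3 × 3` block with those of the `2 × 2` blocks. A single `LDLᵀ` decomposition
therefore serves for both matrices: semidefiniteness and rank are read off from the signs of the
pivots. The `3 × 3` block is always singular of rank two, while the `2 × 2` blocks have determinants
`1, 1 / (t + 1), 1 / (t + 1)` for `X_t` and `0, 0, 0` for its partial transpose, which gives the
ranks `2 + 6` and `2 + 3`.
-/

section General

variable {n K L : Type*} [Fintype n] [Field K] [Field L]

theorem rank_mul_diagonal_mul_of_isUnit_det [DecidableEq n] {V U : Matrix n n K}
    (hV : IsUnit V.det) (hU : IsUnit U.det) {d : n → K} {s : Finset n}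
    (hs : ∀ i, i ∈ s ↔ d i ≠ 0) : (V * diagonal d * U).rank = s.card := by
  classical
  rw [rank_mul_eq_left_of_isUnit_det U _ hU, rank_mul_eq_right_of_isUnit_det V _ hV,
    rank_diagonal, Fintype.card_of_subtype s hs]

theorem rank_map_ringHom (f : K →+* L) (A : Matrix n n K) : (A.map f).rank = A.rank := by
  classical
  obtain ⟨V, U, d, hV, hU, rfl⟩ :
      ∃ (V U : Matrix n n K) (d : n → K), IsUnit V.det ∧ IsUnit U.det ∧ A = V * diagonal d * U := by
    obtain ⟨l, l', d, hA⟩ := Pivot.exists_list_transvec_mul_diagonal_mul_list_transvec A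
    exact ⟨_, _, d, by simp, by simp, hA⟩
  have isUnit_det_map {W : Matrix n n K} (hW : IsUnit W.det) : IsUnit (W.map f).det := by
    rw [← RingHom.mapMatrix_apply, ← RingHom.map_det]
    exact hW.map f
  have hs : ∀ i, i ∈ ({i | d i ≠ 0} : Finset n) ↔ d i ≠ 0 := by simp
  rw [Matrix.map_mul, Matrix.map_mul, diagonal_map (map_zero f),
    rank_mul_diagonal_mul_of_isUnit_det hV hU hs,
    rank_mul_diagonal_mul_of_isUnit_det (isUnit_det_map hV) (isUnit_det_map hU) fun i ↦
      (hs i).trans (map_ne_zero f).symm]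

theorem posSemidef_map_ofReal {m 𝕜 : Type*} [Finite m] [RCLike 𝕜] {A : Matrix m m ℝ}
    (hA : A.PosSemidef) : (A.map (RCLike.ofReal : ℝ → 𝕜)).PosSemidef := by
  obtain ⟨r, v, rfl⟩ := posSemidef_iff_eq_sum_vecMulVec.mp hA
  have hmap : (∑ k, vecMulVec (v k) (star (v k))).map (RCLike.ofReal : ℝ → 𝕜) =
      ∑ k, vecMulVec (fun i ↦ (v k i : 𝕜)) (star fun i ↦ (v k i : 𝕜)) := by
    ext i j
    simp [Matrix.sum_apply, vecMulVec_apply]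
  rw [hmap]
  exact posSemidef_sum _ fun k _ ↦ posSemidef_vecMulVec_self_star _

end General

/-- A matrix whose only off-diagonal entries sit at `(ii, jj)` and `(ij, ji)`, in terms of the block
indices: the local diagonal orthogonal invariant shape. It is a direct sum of a `3 × 3` block on
the indices `0, 4, 8` and of `2 × 2` blocks on `{1, 3}`, `{2, 6}`, `{5, 7}`; both `X_t` and its
partial transpose are members of this family. -/
def ldoiMatrix {R : Type*} [Zero R] (t u a b p q x y : R) : Matrix (Fin 9) (Fin 9) R :=
  !![t, 0, 0, 0, p, 0, 0, 0, q;
     0, a, 0, x, 0, 0, 0, 0, 0;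
     0, 0, b, 0, 0, 0, y, 0, 0;
     0, x, 0, b, 0, 0, 0, 0, 0;
     p, 0, 0, 0, t, 0, 0, 0, q;
     0, 0, 0, 0, 0, a, 0, y, 0;
     0, 0, y, 0, 0, 0, a, 0, 0;
     0, 0, 0, 0, 0, y, 0, b, 0;
     q, 0, 0, 0, q, 0, 0, 0, u]

theorem pt9_eq_of_entries (X : Matrix (Fin 9) (Fin 9) ℂ) :
    pt9 X =
      !![X 0 0, X 0 1, X 0 2, X 3 0, X 3 1, X 3 2, X 6 0, X 6 1, X 6 2;
         X 1 0, X 1 1, X 1 2, X 4 0, X 4 1, X 4 2, X 7 0, X 7 1, X 7 2;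
         X 2 0, X 2 1, X 2 2, X 5 0, X 5 1, X 5 2, X 8 0, X 8 1, X 8 2;
         X 0 3, X 0 4, X 0 5, X 3 3, X 3 4, X 3 5, X 6 3, X 6 4, X 6 5;
         X 1 3, X 1 4, X 1 5, X 4 3, X 4 4, X 4 5, X 7 3, X 7 4, X 7 5;
         X 2 3, X 2 4, X 2 5, X 5 3, X 5 4, X 5 5, X 8 3, X 8 4, X 8 5;
         X 0 6, X 0 7, X 0 8, X 3 6, X 3 7, X 3 8, X 6 6, X 6 7, X 6 8;
         X 1 6, X 1 7, X 1 8, X 4 6, X 4 7, X 4 8, X 7 6, X 7 7, X 7 8;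
         X 2 6, X 2 7, X 2 8, X 5 6, X 5 7, X 5 8, X 8 6, X 8 7, X 8 8] := by
  ext i j
  fin_cases i <;> fin_cases j <;> rfl

theorem pt9_ldoiMatrix (t u a b p q x y : ℂ) :
    pt9 (ldoiMatrix t u a b p q x y) = ldoiMatrix t u a b x y p q := by
  -- Unfolding `pt9` at the explicit matrix instead is too expensive for the kernel.
  rw [pt9_eq_of_entries]
  simp [ldoiMatrix]

theorem map_ldoiMatrix {R S : Type*} [Zero R] [Zero S] (f : R → S) (hf : f 0 = 0)
    (t u a b p q x y : R) :
    (ldoiMatrix t u a b p q x y).map f =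
      ldoiMatrix (f t) (f u) (f a) (f b) (f p) (f q) (f x) (f y) := by
  ext i j
  fin_cases i <;> fin_cases j <;> first | rfl | exact hf

section LDL

variable {K : Type*} [Field K]

/-- The diagonal part of the `LDLᵀ` decomposition of `ldoiMatrix t u a b p q x y` when its `3 × 3`
block is singular, `u * (t + p) = 2 * q ^ 2`, so that the last pivot vanishes. -/
def ldoiPivot (t a b p x y : K) : Fin 9 → K :=
  ![t, a, b, b - x ^ 2 / a, t - p ^ 2 / t, a, a - y ^ 2 / b, b - y ^ 2 / a, 0]

/-- The upper unitriangular factor of the `LDLᵀ` decomposition of `ldoiMatrix t u a b p q x y`. -/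
def ldoiFactor (t a b p q x y : K) : Matrix (Fin 9) (Fin 9) K :=
  !![1, 0, 0, 0, p / t, 0, 0, 0, q / t;
     0, 1, 0, x / a, 0, 0, 0, 0, 0;
     0, 0, 1, 0, 0, 0, y / b, 0, 0;
     0, 0, 0, 1, 0, 0, 0, 0, 0;
     0, 0, 0, 0, 1, 0, 0, 0, q / (t + p);
     0, 0, 0, 0, 0, 1, 0, y / a, 0;
     0, 0, 0, 0, 0, 0, 1, 0, 0;
     0, 0, 0, 0, 0, 0, 0, 1, 0;
     0, 0, 0, 0, 0, 0, 0, 0, 1]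

theorem isUpperTriangular_ldoiFactor (t a b p q x y : K) :
    (ldoiFactor t a b p q x y).IsUpperTriangular := by
  intro i j hij
  fin_cases i <;> fin_cases j <;> first | rfl | exact absurd hij (by decide)

theorem det_ldoiFactor (t a b p q x y : K) : (ldoiFactor t a b p q x y).det = 1 := by
  rw [det_of_isUpperTriangular (isUpperTriangular_ldoiFactor t a b p q x y)]
  refine Finset.prod_eq_one fun i _ ↦ ?_
  fin_cases i <;> rfl

theorem ldoiMatrix_eq_transpose_mul_diagonal_mul {t u a b p q : K} (x y : K) (ht : t ≠ 0)
    (htp : t + p ≠ 0) (ha : a ≠ 0) (hb : b ≠ 0) (hu : u * (t + p) = 2 * q ^ 2) :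
    ldoiMatrix t u a b p q x y =
      (ldoiFactor t a b p q x y)ᵀ * diagonal (ldoiPivot t a b p x y) *
        ldoiFactor t a b p q x y := by
  obtain rfl : u = 2 * q ^ 2 / (t + p) := eq_div_of_mul_eq htp hu
  ext i j
  rw [mul_apply]
  simp only [mul_diagonal, transpose_apply, Fin.sum_univ_succ]
  fin_cases i <;> fin_cases j <;>
    simp [ldoiMatrix, ldoiFactor, ldoiPivot] <;>
    field_simp <;> ring

theorem sub_div_eq_zero_iff {a b c : K} (ha : a ≠ 0) : b - c / a = 0 ↔ c = a * b := by
  rw [sub_eq_zero, eq_div_iff ha, eq_comm, mul_comm]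

theorem rank_ldoiMatrix {t u a b p q x y : K} (ht : t ≠ 0) (htp : t + p ≠ 0) (ha : a ≠ 0)
    (hb : b ≠ 0) (hu : u * (t + p) = 2 * q ^ 2) {s : Finset (Fin 9)}
    (hs : ∀ i, i ∈ s ↔ ldoiPivot t a b p x y i ≠ 0) :
    (ldoiMatrix t u a b p q x y).rank = s.card := by
  rw [ldoiMatrix_eq_transpose_mul_diagonal_mul x y ht htp ha hb hu]
  exact rank_mul_diagonal_mul_of_isUnit_det (by simp [det_ldoiFactor]) (by simp [det_ldoiFactor]) hs

theorem rank_ldoiMatrix_eq_eight {t u a b p q x y : K} (ht : t ≠ 0)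
    (hp : p ^ 2 ≠ t * t) (ha : a ≠ 0) (hb : b ≠ 0) (hu : u * (t + p) = 2 * q ^ 2)
    (hx : x ^ 2 ≠ a * b) (hy : y ^ 2 ≠ a * b) : (ldoiMatrix t u a b p q x y).rank = 8 := by
  have htp : t + p ≠ 0 := fun h ↦ hp (by linear_combination (p - t) * h)
  refine rank_ldoiMatrix (s := {8}ᶜ) ht htp ha hb hu fun i ↦ ?_
  fin_cases i <;> simp [ldoiPivot, sub_div_eq_zero_iff, ht, hp, ha, hb, hx, hy, mul_comm b a]

theorem rank_ldoiMatrix_eq_five {t u a b p q x y : K} (ht : t ≠ 0)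
    (hp : p ^ 2 ≠ t * t) (ha : a ≠ 0) (hb : b ≠ 0) (hu : u * (t + p) = 2 * q ^ 2)
    (hx : x ^ 2 = a * b) (hy : y ^ 2 = a * b) : (ldoiMatrix t u a b p q x y).rank = 5 := by
  have htp : t + p ≠ 0 := fun h ↦ hp (by linear_combination (p - t) * h)
  refine rank_ldoiMatrix (s := {0, 1, 2, 4, 5}) ht htp ha hb hu fun i ↦ ?_
  fin_cases i <;> simp [ldoiPivot, sub_div_eq_zero_iff, ht, hp, ha, hb, hx, hy]

end LDL

theorem posSemidef_ldoiMatrix {t u a b p q x y : ℝ} (hp : |p| < t) (ha : 0 < a) (hb : 0 < b)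
    (hu : u * (t + p) = 2 * q ^ 2) (hx : x ^ 2 ≤ a * b) (hy : y ^ 2 ≤ a * b) :
    (ldoiMatrix t u a b p q x y).PosSemidef := by
  have ht : 0 < t := (abs_nonneg p).trans_lt hp
  have htp : 0 < t + p := by linarith [neg_abs_le p]
  have hpivot : 0 ≤ ldoiPivot t a b p x y := by
    have hx' : x ^ 2 / a ≤ b := (div_le_iff₀' ha).mpr hx
    have hya : y ^ 2 / a ≤ b := (div_le_iff₀' ha).mpr hy
    have hyb : y ^ 2 / b ≤ a := (div_le_iff₀ hb).mpr hy
    have hpt : p ^ 2 / t ≤ t := (div_le_iff₀ ht).mpr (by nlinarith [sq_abs p, abs_nonneg p])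
    intro i
    fin_cases i <;> simp [ldoiPivot, ht.le, ha.le, hb.le, hx', hya, hyb, hpt]
  rw [ldoiMatrix_eq_transpose_mul_diagonal_mul x y ht.ne' htp.ne' ha.ne' hb.ne' hu,
    ← conjTranspose_eq_transpose_of_trivial]
  exact (PosSemidef.diagonal hpivot).conjTranspose_mul_mul_same _

theorem Xt_eq_map_ldoiMatrix (t lam mu : ℝ) :
    Xt t lam mu = (ldoiMatrix t (2 / (t + 1)) (lam ^ 2) (mu ^ 2) 1 1 0 √(t / (t + 1))).map
      Complex.ofRealHom := by
  rw [map_ldoiMatrix _ (map_zero _)]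
  simp [Xt, ldoiMatrix]

theorem pt9_Xt_eq_map_ldoiMatrix (t lam mu : ℝ) :
    pt9 (Xt t lam mu) = (ldoiMatrix t (2 / (t + 1)) (lam ^ 2) (mu ^ 2) 0 √(t / (t + 1)) 1 1).map
      Complex.ofRealHom := by
  rw [Xt_eq_map_ldoiMatrix, map_ldoiMatrix _ (map_zero _), map_ldoiMatrix _ (map_zero _),
    pt9_ldoiMatrix]

theorem Xt_ppt_rank_general (t lam mu : ℝ) (ht : 1 < t) (hlam : lam ≠ 0) (hmu : mu = 1 / lam) :
    (Xt t lam mu).PosSemidef ∧ (pt9 (Xt t lam mu)).PosSemidef ∧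
      (Xt t lam mu).rank = 8 ∧ (pt9 (Xt t lam mu)).rank = 5 := by
  have ht0 : 0 < t := by linarith
  have hl : 0 < lam ^ 2 := by positivity
  have hm : 0 < mu ^ 2 := by rw [hmu]; positivity
  have hlm : lam ^ 2 * mu ^ 2 = 1 := by rw [hmu]; field_simp
  have hs : √(t / (t + 1)) ^ 2 = t / (t + 1) := Real.sq_sqrt (by positivity)
  have hs1 : √(t / (t + 1)) ^ 2 < lam ^ 2 * mu ^ 2 := by
    rw [hs, hlm, div_lt_one (by positivity)]
    linarith
  have hu : 2 / (t + 1) * (t + 1) = 2 * 1 ^ 2 := by field_simp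
  have hu' : 2 / (t + 1) * (t + 0) = 2 * √(t / (t + 1)) ^ 2 := by rw [hs]; ring
  rw [pt9_Xt_eq_map_ldoiMatrix, Xt_eq_map_ldoiMatrix, rank_map_ringHom, rank_map_ringHom]
  refine ⟨posSemidef_map_ofReal ?_, posSemidef_map_ofReal ?_, ?_, ?_⟩
  · exact posSemidef_ldoiMatrix (by simpa using ht) hl hm hu (by simp [hlm]) hs1.le
  · exact posSemidef_ldoiMatrix (by simpa using ht0) hl hm hu' (by simp [hlm]) (by simp [hlm])
  · exact rank_ldoiMatrix_eq_eight ht0.ne' (by nlinarith) hl.ne' hm.ne' hu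
      (by simp [hlm]) hs1.ne
  · exact rank_ldoiMatrix_eq_five ht0.ne' (by simp [ht0.ne']) hl.ne' hm.ne' hu'
      (by simp [hlm]) (by simp [hlm])

/-- `X_t` is PPT with `rank X_t = 8` and `rank X_t^τ = 5` (an `(8,5)` edge state). -/
theorem Xt_ppt_rank (t lam mu : ℝ) (ht : 1 < t) (hlam : 0 < lam) (h1 : lam ≠ 1)
    (hmu : mu = 1 / lam) :
    (Xt t lam mu).PosSemidef ∧ (pt9 (Xt t lam mu)).PosSemidef ∧
      (Xt t lam mu).rank = 8 ∧ (pt9 (Xt t lam mu)).rank = 5 := by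
  exact Xt_ppt_rank_general t lam mu ht hlam.ne' hmu
end

section
/- Let t > 1 be real, λ > 0, λ ≠ 1, μ = 1/λ, and let E_t ⊆ M₃(ℂ) be the 5-dimensional subspace spanned by t·e₁₁ + √(t/(t+1))·e₃₃, t·e₂₂ + √(t/(t+1))·e₃₃, λe₁₂ + μe₂₁, λe₂₃ + μe₃₂, and λe₃₁ + μe₁₃. Then a nonzero matrix z ∈ E_t has rank 1 if and only if z is a nonzero complex scalar multiple of one of the following six matrices: (t²+t)^{1/4}e₁₁ + μe₁₃ + λe₃₁ + (t²+t)^{-1/4}e₃₃; −(t²+t)^{1/4}e₁₁ + μe₁₃ + λe₃₁ − (t²+t)^{-1/4}e₃₃; (t²+t)^{1/4}e₂₂ + λe₂₃ + μe₃₂ + (t²+t)^{-1/4}e₃₃; −(t²+t)^{1/4}e₂₂ + λe₂₃ + μe₃₂ − (t²+t)^{-1/4}e₃₃; i·e₁₁ + λe₁₂ + μe₂₁ − i·e₂₂; −i·e₁₁ + λe₁₂ + μe₂₁ + i·e₂₂. -/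
open Matrix Complex

/-- The `5`-dimensional subspace `E_t ⊆ M₃(ℂ)` spanned by `t·e₁₁ + √(t/(t+1))·e₃₃`,
`t·e₂₂ + √(t/(t+1))·e₃₃`, `λe₁₂ + μe₂₁`, `λe₂₃ + μe₃₂` and `λe₃₁ + μe₁₃`. -/
noncomputable def Et (t lam mu : ℝ) : Submodule ℂ (Matrix (Fin 3) (Fin 3) ℂ) :=
  Submodule.span ℂ
    { !![(t : ℂ), 0, 0; 0, 0, 0; 0, 0, ((Real.sqrt (t / (t + 1)) : ℝ) : ℂ)],
      !![0, 0, 0; 0, (t : ℂ), 0; 0, 0, ((Real.sqrt (t / (t + 1)) : ℝ) : ℂ)],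
      !![0, (lam : ℂ), 0; (mu : ℂ), 0, 0; 0, 0, 0],
      !![0, 0, 0; 0, 0, (lam : ℂ); 0, (mu : ℂ), 0],
      !![0, 0, (mu : ℂ); 0, 0, 0; (lam : ℂ), 0, 0] }

/-!
A matrix of `E_t` has the shape `p₀, p₁, p₂` on the diagonal, `λ x₀, λ x₁, λ x₂` just above it
(cyclically) and `x₀/λ, x₁/λ, x₂/λ` just below it, with one linear relation `r² p₂ = p₀ + p₁`,
where `r = (t² + t)^{1/4}`. Each pair of transposed off-diagonal minors gives
`p_{i+2} x_i = λ³ x_{i+1} x_{i+2}` and `x_{i+1} x_{i+2} = λ³ p_{i+2} x_i`; as `λ⁶ ≠ 1`, both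
products vanish. Hence a rank-one matrix is either supported on one diagonal entry, which the
linear relation forbids, or on a `2 × 2` block that equals `[[ρ, λ], [1/λ, 1/ρ]]` up to a scalar.
In the three possible blocks the linear relation becomes `ρ² = -1`, `ρ² = r²` and `ρ² = r⁻²`.
-/

section RankOne

variable {K m n : Type*} [Field K] [Fintype n]

lemma matrix_eq_zero_of_rank_eq_zero [Finite m] {A : Matrix m n K} (hA : A.rank = 0) : A = 0 := by
  classical
  have hrange : A.mulVecLin.range = ⊥ := Submodule.finrank_eq_zero.mp hA
  have hlin : A.mulVecLin = 0 := LinearMap.range_eq_bot.mp hrange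
  ext i j
  simpa using congrFun (LinearMap.congr_fun hlin (Pi.single j 1)) i

lemma matrix_rank_vecMulVec_eq_one [Finite m] {x : m → K} {y : n → K} (hx : x ≠ 0) (hy : y ≠ 0) :
    (vecMulVec x y).rank = 1 := by
  have hle : (vecMulVec x y).rank ≤ 1 := rank_vecMulVec_le x y
  have hne : (vecMulVec x y).rank ≠ 0 := fun h ↦ by
    obtain ⟨i, hi⟩ := Function.ne_iff.mp hx
    obtain ⟨j, hj⟩ := Function.ne_iff.mp hy
    exact mul_ne_zero hi hj (congrFun₂ (matrix_eq_zero_of_rank_eq_zero h) i j)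
  omega

lemma mul_eq_mul_of_matrix_rank_le_one {R m n : Type*} [CommRing R] [IsDomain R] [Fintype n]
    {A : Matrix m n R} (hA : A.rank ≤ 1) (i j : m) (k l : n) : A i k * A j l = A i l * A j k := by
  by_contra hne
  have hdet : (A.submatrix ![i, j] ![k, l]).det ≠ 0 := by
    rw [det_fin_two]
    exact sub_ne_zero.mpr hne
  have hrank := rank_of_det_ne_zero hdet
  have hle := rank_submatrix_le A ![i, j] ![k, l]
  rw [Fintype.card_fin] at hrank
  omega

end RankOne

lemma eq_zero_of_eq_mul_of_eq_mul {R : Type*} [CommRing R] [NoZeroDivisors R] {w u v : R}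
    (hw : w ^ 2 ≠ 1) (huv : u = w * v) (hvu : v = w * u) : u = 0 ∧ v = 0 := by
  have hu : (w ^ 2 - 1) * u = 0 := by linear_combination -w * hvu - huv
  have hu0 : u = 0 := (mul_eq_zero.mp hu).resolve_left (sub_ne_zero.mpr hw)
  exact ⟨hu0, by rw [hvu, hu0, mul_zero]⟩

lemma eq_single_of_mul_eq_zero {R : Type*} [MulZeroClass R] [NoZeroDivisors R] {p : Fin 3 → R}
    (hp : p ≠ 0) (hmul : ∀ i, p i * p (i + 1) = 0) :
    ∃ i, p i ≠ 0 ∧ p = Pi.single i (p i) := by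
  obtain ⟨i, hi⟩ := Function.ne_iff.mp hp
  have hi : p i ≠ 0 := hi
  have hnext := hmul i
  have hprev := hmul (i + 2)
  refine ⟨i, hi, funext fun j ↦ ?_⟩
  fin_cases i <;> fin_cases j <;> simp_all

section TwistedSymmetric

variable {K : Type*} [Field K]

/-- The twisted symmetric `3 × 3` matrix with diagonal `v.1` and off-diagonal coefficients `v.2`:
the entries `(i, i + 1)` and `(i + 1, i)`, with indices modulo `3`, are `q * v.2 i` and
`q⁻¹ * v.2 i`. The matrices of `Et` are of this form for `q = λ`. -/
def twistedSymm (q : K) : ((Fin 3 → K) × (Fin 3 → K)) →ₗ[K] Matrix (Fin 3) (Fin 3) K where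
  toFun v := !![v.1 0, q * v.2 0, q⁻¹ * v.2 2;
                q⁻¹ * v.2 0, v.1 1, q * v.2 1;
                q * v.2 2, q⁻¹ * v.2 1, v.1 2]
  map_add' v w := by simp [mul_add]
  map_smul' c v := by simp [mul_left_comm]

/-- The coefficients `(p, x)` of the twisted symmetric matrix supported on the rows and columns
`i` and `i + 1`, where it is the rank-one block `[[ρ, q], [q⁻¹, ρ⁻¹]]`. -/
def blockCoeff (i : Fin 3) (ρ : K) : (Fin 3 → K) × (Fin 3 → K) :=
  (Pi.single i ρ + Pi.single (i + 1) ρ⁻¹, Pi.single i 1)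

lemma twistedSymm_apply (q : K) (v : (Fin 3 → K) × (Fin 3 → K)) :
    twistedSymm q v = !![v.1 0, q * v.2 0, q⁻¹ * v.2 2;
                         q⁻¹ * v.2 0, v.1 1, q * v.2 1;
                         q * v.2 2, q⁻¹ * v.2 1, v.1 2] := rfl

lemma twistedSymm_injective {q : K} (hq : q ≠ 0) : Function.Injective (twistedSymm q) := by
  refine (injective_iff_map_eq_zero _).mpr fun v hv ↦ ?_
  have entry (i j) : twistedSymm q v i j = 0 := by rw [hv]; rfl
  simp only [twistedSymm_apply] at entry
  ext i <;> fin_cases i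
  · exact entry 0 0
  · exact entry 1 1
  · exact entry 2 2
  · simpa [hq] using entry 0 1
  · simpa [hq] using entry 1 2
  · simpa [hq] using entry 2 0

lemma twistedSymm_eq_smul_iff {q : K} (hq : q ≠ 0) {v w : (Fin 3 → K) × (Fin 3 → K)} {c : K} :
    twistedSymm q v = c • twistedSymm q w ↔ v = c • w := by
  rw [← map_smul, (twistedSymm_injective hq).eq_iff]

lemma twistedSymm_blockCoeff_zero (q ρ : K) :
    twistedSymm q (blockCoeff 0 ρ) = !![ρ, q, 0; q⁻¹, ρ⁻¹, 0; 0, 0, 0] := by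
  simp [twistedSymm_apply, blockCoeff]

lemma twistedSymm_blockCoeff_one (q ρ : K) :
    twistedSymm q (blockCoeff 1 ρ) = !![0, 0, 0; 0, ρ, q; 0, q⁻¹, ρ⁻¹] := by
  simp [twistedSymm_apply, blockCoeff]

lemma twistedSymm_blockCoeff_two (q ρ : K) :
    twistedSymm q (blockCoeff 2 ρ) = !![ρ⁻¹, 0, q⁻¹; 0, 0, 0; q, 0, ρ] := by
  simp [twistedSymm_apply, blockCoeff]

lemma twistedSymm_blockCoeff_eq_vecMulVec {q ρ : K} (hq : q ≠ 0) (hρ : ρ ≠ 0) (i : Fin 3) :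
    twistedSymm q (blockCoeff i ρ) =
      vecMulVec (Pi.single i ρ + Pi.single (i + 1) q⁻¹)
        (Pi.single i 1 + Pi.single (i + 1) (q * ρ⁻¹)) := by
  ext j k
  fin_cases i <;> fin_cases j <;> fin_cases k <;>
    simp [twistedSymm_apply, blockCoeff, vecMulVec_apply, hq, hρ, mul_left_comm ρ]

lemma rank_smul_twistedSymm_blockCoeff {q c ρ : K} (hq : q ≠ 0) (hc : c ≠ 0) (hρ : ρ ≠ 0)
    (i : Fin 3) : (twistedSymm q (c • blockCoeff i ρ)).rank = 1 := by
  rw [map_smul, twistedSymm_blockCoeff_eq_vecMulVec hq hρ, ← smul_vecMulVec]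
  refine matrix_rank_vecMulVec_eq_one (fun h ↦ ?_) fun h ↦ ?_
  · simpa [hc, hρ] using congrFun h i
  · simpa using congrFun h i

lemma rank_twistedSymm_single {a : K} (ha : a ≠ 0) (q : K) (i : Fin 3) :
    (twistedSymm q (Pi.single i a, 0)).rank = 1 := by
  have houter : twistedSymm q (Pi.single i a, 0) = vecMulVec (Pi.single i a) (Pi.single i 1) := by
    ext j k
    fin_cases i <;> fin_cases j <;> fin_cases k <;> simp [twistedSymm_apply, vecMulVec_apply]
  rw [houter]
  exact matrix_rank_vecMulVec_eq_one (by simpa using ha) (by simp)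

lemma coeff_eqs_of_rank_twistedSymm_le_one {q : K} (hq : q ≠ 0) (hq6 : q ^ 6 ≠ 1)
    {v : (Fin 3 → K) × (Fin 3 → K)} (hv : (twistedSymm q v).rank ≤ 1) (i : Fin 3) :
    v.1 i * v.1 (i + 1) = v.2 i ^ 2 ∧ v.1 (i + 2) * v.2 i = 0 ∧
      v.2 (i + 1) * v.2 (i + 2) = 0 := by
  have minor := mul_eq_mul_of_matrix_rank_le_one hv
  have principal : v.1 i * v.1 (i + 1) = q * v.2 i * (q⁻¹ * v.2 i) := by
    have := minor i (i + 1) i (i + 1)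
    fin_cases i <;> simpa [twistedSymm_apply, mul_comm] using this
  have upper : q * v.2 (i + 1) * (q * v.2 (i + 2)) = q⁻¹ * v.2 i * v.1 (i + 2) := by
    have := minor (i + 1) (i + 2) (i + 2) i
    fin_cases i <;> simpa [twistedSymm_apply] using this
  have lower : q⁻¹ * v.2 (i + 1) * (q⁻¹ * v.2 (i + 2)) = v.1 (i + 2) * (q * v.2 i) := by
    have := minor (i + 2) i (i + 1) (i + 2)
    fin_cases i <;> simpa [twistedSymm_apply] using this
  refine ⟨by rw [principal]; field_simp, ?_⟩
  refine eq_zero_of_eq_mul_of_eq_mul (w := q ^ 3) (by rwa [← pow_mul]) ?_ ?_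
  · field_simp at upper
    linear_combination -upper
  · field_simp at lower
    linear_combination lower

lemma eq_smul_blockCoeff {v : (Fin 3 → K) × (Fin 3 → K)} {i : Fin 3} (hx : v.2 i ≠ 0)
    (hdiag : v.1 i * v.1 (i + 1) = v.2 i ^ 2) (hp : v.1 (i + 2) = 0)
    (hx₁ : v.2 (i + 1) = 0) (hx₂ : v.2 (i + 2) = 0) :
    v = v.2 i • blockCoeff i (v.1 i / v.2 i) := by
  have hpi : v.1 i ≠ 0 := left_ne_zero_of_mul (hdiag ▸ pow_ne_zero 2 hx)
  have hnext : v.1 (i + 1) = v.2 i * (v.2 i / v.1 i) := by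
    field_simp
    linear_combination hdiag
  ext j <;> fin_cases i <;> fin_cases j <;> simp_all [blockCoeff, mul_div_cancel₀]

theorem rank_twistedSymm_eq_one_iff {q : K} (hq : q ≠ 0) (hq6 : q ^ 6 ≠ 1)
    {v : (Fin 3 → K) × (Fin 3 → K)} :
    (twistedSymm q v).rank = 1 ↔
      (∃ i, ∃ a ≠ 0, v = (Pi.single i a, 0)) ∨
        ∃ c : K, c ≠ 0 ∧ ∃ ρ ≠ 0, ∃ i, v = c • blockCoeff i ρ := by
  constructor
  · intro hrank
    have eqs := coeff_eqs_of_rank_twistedSymm_le_one hq hq6 hrank.le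
    by_cases hx : v.2 = 0
    · have hp : v.1 ≠ 0 := fun hp ↦ by
        simp [show v = 0 from Prod.ext hp hx] at hrank
      obtain ⟨i, hi, hsingle⟩ :=
        eq_single_of_mul_eq_zero hp fun i ↦ by simpa [hx] using (eqs i).1
      exact .inl ⟨i, v.1 i, hi, Prod.ext hsingle hx⟩
    · obtain ⟨i, hi⟩ : ∃ i, v.2 i ≠ 0 := Function.ne_iff.mp hx
      have hdiag := (eqs i).1
      have hpi : v.1 i ≠ 0 := left_ne_zero_of_mul (hdiag ▸ pow_ne_zero 2 hi)
      have hp : v.1 (i + 2) = 0 := (mul_eq_zero.mp (eqs i).2.1).resolve_right hi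
      have hx₁ : v.2 (i + 1) = 0 := by
        have := (eqs (i + 2)).2.2
        fin_cases i <;> simp_all
      have hx₂ : v.2 (i + 2) = 0 := by
        have := (eqs (i + 1)).2.2
        fin_cases i <;> simp_all
      exact .inr ⟨v.2 i, hi, v.1 i / v.2 i, div_ne_zero hpi hi, i,
        eq_smul_blockCoeff hi hdiag hp hx₁ hx₂⟩
  · rintro (⟨i, a, ha, rfl⟩ | ⟨c, hc, ρ, hρ, i, rfl⟩)
    · exact rank_twistedSymm_single ha q i
    · exact rank_smul_twistedSymm_blockCoeff hq hc hρ i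

lemma linear_relation_smul_blockCoeff_zero {r c ρ : K} (hc : c ≠ 0) (hρ : ρ ≠ 0) :
    r ^ 2 * (c • blockCoeff 0 ρ).1 2 = (c • blockCoeff 0 ρ).1 0 + (c • blockCoeff 0 ρ).1 1 ↔
      ρ ^ 2 = -1 := by
  suffices h : 0 = c * ρ + c * ρ⁻¹ ↔ ρ ^ 2 = -1 by simpa [blockCoeff] using h
  have hsum : c * ρ + c * ρ⁻¹ = c * ρ⁻¹ * (ρ ^ 2 + 1) := by field_simp
  rw [eq_comm, hsum, mul_eq_zero_iff_left (mul_ne_zero hc (inv_ne_zero hρ)),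
    add_eq_zero_iff_eq_neg]

lemma linear_relation_smul_blockCoeff_one {r c ρ : K} (hc : c ≠ 0) (hρ : ρ ≠ 0) :
    r ^ 2 * (c • blockCoeff 1 ρ).1 2 = (c • blockCoeff 1 ρ).1 0 + (c • blockCoeff 1 ρ).1 1 ↔
      ρ ^ 2 = r ^ 2 := by
  suffices h : r ^ 2 * (c * ρ⁻¹) = c * ρ ↔ ρ ^ 2 = r ^ 2 by simpa [blockCoeff] using h
  field_simp
  exact eq_comm

lemma linear_relation_smul_blockCoeff_two {r c ρ : K} (hr : r ≠ 0) (hc : c ≠ 0) (hρ : ρ ≠ 0) :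
    r ^ 2 * (c • blockCoeff 2 ρ).1 2 = (c • blockCoeff 2 ρ).1 0 + (c • blockCoeff 2 ρ).1 1 ↔
      ρ ^ 2 = r⁻¹ ^ 2 := by
  suffices h : r ^ 2 * (c * ρ) = c * ρ⁻¹ ↔ ρ ^ 2 = r⁻¹ ^ 2 by simpa [blockCoeff] using h
  field_simp

theorem rank_twistedSymm_eq_one_iff_of_linear_relation {q r ι : K} (hq : q ≠ 0) (hq6 : q ^ 6 ≠ 1)
    (hr : r ≠ 0) (hι : ι ^ 2 = -1) {v : (Fin 3 → K) × (Fin 3 → K)}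
    (hv : r ^ 2 * v.1 2 = v.1 0 + v.1 1) :
    (twistedSymm q v).rank = 1 ↔
      ∃ c : K, c ≠ 0 ∧ (v = c • blockCoeff 2 r⁻¹ ∨ v = c • blockCoeff 2 (-r⁻¹) ∨
        v = c • blockCoeff 1 r ∨ v = c • blockCoeff 1 (-r) ∨
        v = c • blockCoeff 0 ι ∨ v = c • blockCoeff 0 (-ι)) := by
  rw [rank_twistedSymm_eq_one_iff hq hq6]
  constructor
  · rintro (⟨i, a, ha, rfl⟩ | ⟨c, hc, ρ, hρ, i, rfl⟩)
    · fin_cases i <;> simp_all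
    · refine ⟨c, hc, ?_⟩
      obtain rfl | rfl | rfl : i = 0 ∨ i = 1 ∨ i = 2 := by lia
      · rw [linear_relation_smul_blockCoeff_zero hc hρ, ← hι] at hv
        obtain rfl | rfl := sq_eq_sq_iff_eq_or_eq_neg.mp hv
        · exact .inr <| .inr <| .inr <| .inr <| .inl rfl
        · exact .inr <| .inr <| .inr <| .inr <| .inr rfl
      · rw [linear_relation_smul_blockCoeff_one hc hρ] at hv
        obtain rfl | rfl := sq_eq_sq_iff_eq_or_eq_neg.mp hv
        · exact .inr <| .inr <| .inl rfl
        · exact .inr <| .inr <| .inr <| .inl rfl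
      · rw [linear_relation_smul_blockCoeff_two hr hc hρ] at hv
        obtain rfl | rfl := sq_eq_sq_iff_eq_or_eq_neg.mp hv
        · exact .inl rfl
        · exact .inr <| .inl rfl
  · have hι0 : ι ≠ 0 := by
      rintro rfl
      simp at hι
    rintro ⟨c, hc, h | h | h | h | h | h⟩
    · exact .inr ⟨c, hc, r⁻¹, inv_ne_zero hr, 2, h⟩
    · exact .inr ⟨c, hc, -r⁻¹, neg_ne_zero.mpr (inv_ne_zero hr), 2, h⟩
    · exact .inr ⟨c, hc, r, hr, 1, h⟩
    · exact .inr ⟨c, hc, -r, neg_ne_zero.mpr hr, 1, h⟩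
    · exact .inr ⟨c, hc, ι, hι0, 0, h⟩
    · exact .inr ⟨c, hc, -ι, neg_ne_zero.mpr hι0, 0, h⟩

end TwistedSymmetric

lemma sqrt_div_mul_rpow_quarter_sq {t : ℝ} (ht : 0 < t) :
    √(t / (t + 1)) * ((t ^ 2 + t) ^ ((1 : ℝ) / 4)) ^ 2 = t := by
  have hroot : ((t ^ 2 + t) ^ ((1 : ℝ) / 4)) ^ 2 = √(t ^ 2 + t) := by
    rw [← Real.rpow_natCast, ← Real.rpow_mul (by positivity), Real.sqrt_eq_rpow]
    norm_num
  have hprod : t / (t + 1) * (t ^ 2 + t) = t ^ 2 := by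
    field_simp
  rw [hroot, ← Real.sqrt_mul (by positivity), hprod, Real.sqrt_sq ht.le]

lemma exists_twistedSymm_of_mem_Et {t r lam : ℝ} (hr : √(t / (t + 1)) * r ^ 2 = t)
    {z : Matrix (Fin 3) (Fin 3) ℂ} (hz : z ∈ Et t lam lam⁻¹) :
    ∃ v, (r : ℂ) ^ 2 * v.1 2 = v.1 0 + v.1 1 ∧ z = twistedSymm (lam : ℂ) v := by
  have hrC : ((√(t / (t + 1)) : ℝ) : ℂ) * (r : ℂ) ^ 2 = t := by exact_mod_cast hr
  simp only [Et, Submodule.mem_span_insert, Submodule.mem_span_singleton] at hz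
  obtain ⟨a, _, ⟨b, _, ⟨c, _, ⟨d, _, ⟨e, rfl⟩, rfl⟩, rfl⟩, rfl⟩, rfl⟩ := hz
  refine ⟨(![t * a, t * b, √(t / (t + 1)) * (a + b)], ![c, d, e]), ?_, ?_⟩
  · change (r : ℂ) ^ 2 * (√(t / (t + 1)) * (a + b)) = t * a + t * b
    linear_combination (a + b) * hrC
  · simp [twistedSymm_apply, mul_comm, ← add_mul]

lemma ofReal_pow_ne_one {x : ℝ} (hx : |x| ≠ 1) {n : ℕ} (hn : n ≠ 0) : (x : ℂ) ^ n ≠ 1 := fun h ↦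
  hx <| (pow_eq_one_iff_of_nonneg (abs_nonneg x) hn).mp <| by simpa using congrArg norm h

theorem Et_rank_one_classification_general (t lam mu : ℝ) (ht : 0 < t)
    (hlam : lam ≠ 0) (h1 : |lam| ≠ 1) (hmu : mu = 1 / lam) :
    ∀ z ∈ Et t lam mu,
      (z.rank = 1 ↔
        ∃ c : ℂ, c ≠ 0 ∧
          (z = c • !![(((t ^ 2 + t) ^ ((1 : ℝ) / 4) : ℝ) : ℂ), 0, (mu : ℂ);
                      0, 0, 0;
                      (lam : ℂ), 0, (((t ^ 2 + t) ^ (-(1 : ℝ) / 4) : ℝ) : ℂ)] ∨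
           z = c • !![(-((t ^ 2 + t) ^ ((1 : ℝ) / 4) : ℝ) : ℂ), 0, (mu : ℂ);
                      0, 0, 0;
                      (lam : ℂ), 0, (-((t ^ 2 + t) ^ (-(1 : ℝ) / 4) : ℝ) : ℂ)] ∨
           z = c • !![0, 0, 0;
                      0, (((t ^ 2 + t) ^ ((1 : ℝ) / 4) : ℝ) : ℂ), (lam : ℂ);
                      0, (mu : ℂ), (((t ^ 2 + t) ^ (-(1 : ℝ) / 4) : ℝ) : ℂ)] ∨
           z = c • !![0, 0, 0;
                      0, (-((t ^ 2 + t) ^ ((1 : ℝ) / 4) : ℝ) : ℂ), (lam : ℂ);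
                      0, (mu : ℂ), (-((t ^ 2 + t) ^ (-(1 : ℝ) / 4) : ℝ) : ℂ)] ∨
           z = c • !![Complex.I, (lam : ℂ), 0;
                      (mu : ℂ), -Complex.I, 0;
                      0, 0, 0] ∨
           z = c • !![-Complex.I, (lam : ℂ), 0;
                      (mu : ℂ), Complex.I, 0;
                      0, 0, 0])) := by
  intro z hz
  rw [one_div] at hmu
  subst hmu
  have hpos : 0 < t ^ 2 + t := by positivity
  have hr : (((t ^ 2 + t) ^ ((1 : ℝ) / 4) : ℝ) : ℂ) ≠ 0 :=
    Complex.ofReal_ne_zero.mpr (Real.rpow_pos_of_pos hpos _).ne'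
  have hq : (lam : ℂ) ≠ 0 := Complex.ofReal_ne_zero.mpr hlam
  have hq6 : (lam : ℂ) ^ 6 ≠ 1 := ofReal_pow_ne_one h1 (by norm_num)
  obtain ⟨v, hv, rfl⟩ := exists_twistedSymm_of_mem_Et (sqrt_div_mul_rpow_quarter_sq ht) hz
  rw [rank_twistedSymm_eq_one_iff_of_linear_relation hq hq6 hr Complex.I_sq hv, neg_div,
    Real.rpow_neg hpos.le]
  simp only [← twistedSymm_eq_smul_iff hq, twistedSymm_blockCoeff_zero,
    twistedSymm_blockCoeff_one, twistedSymm_blockCoeff_two, inv_inv, inv_neg, Complex.inv_I,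
    neg_neg, Complex.ofReal_inv]

/-- A nonzero matrix `z ∈ E_t` has rank one if and only if `z` is a nonzero complex
scalar multiple of one of six explicit matrices. -/
theorem Et_rank_one_classification (t lam mu : ℝ) (ht : 1 < t) (hlam : 0 < lam)
    (h1 : lam ≠ 1) (hmu : mu = 1 / lam) :
    ∀ z ∈ Et t lam mu, z ≠ 0 →
      (z.rank = 1 ↔
        ∃ c : ℂ, c ≠ 0 ∧
          (z = c • !![(((t ^ 2 + t) ^ ((1 : ℝ) / 4) : ℝ) : ℂ), 0, (mu : ℂ);
                      0, 0, 0;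
                      (lam : ℂ), 0, (((t ^ 2 + t) ^ (-(1 : ℝ) / 4) : ℝ) : ℂ)] ∨
           z = c • !![(-((t ^ 2 + t) ^ ((1 : ℝ) / 4) : ℝ) : ℂ), 0, (mu : ℂ);
                      0, 0, 0;
                      (lam : ℂ), 0, (-((t ^ 2 + t) ^ (-(1 : ℝ) / 4) : ℝ) : ℂ)] ∨
           z = c • !![0, 0, 0;
                      0, (((t ^ 2 + t) ^ ((1 : ℝ) / 4) : ℝ) : ℂ), (lam : ℂ);
                      0, (mu : ℂ), (((t ^ 2 + t) ^ (-(1 : ℝ) / 4) : ℝ) : ℂ)] ∨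
           z = c • !![0, 0, 0;
                      0, (-((t ^ 2 + t) ^ ((1 : ℝ) / 4) : ℝ) : ℂ), (lam : ℂ);
                      0, (mu : ℂ), (-((t ^ 2 + t) ^ (-(1 : ℝ) / 4) : ℝ) : ℂ)] ∨
           z = c • !![Complex.I, (lam : ℂ), 0;
                      (mu : ℂ), -Complex.I, 0;
                      0, 0, 0] ∨
           z = c • !![-Complex.I, (lam : ℂ), 0;
                      (mu : ℂ), Complex.I, 0;
                      0, 0, 0])) :=
  fun z hz _ ↦ Et_rank_one_classification_general t lam mu (one_pos.trans ht) hlam.ne'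
    (by rwa [abs_of_pos hlam]) hmu z hz
end

section
/- Let t > 1 be real, λ > 0, λ ≠ 1, μ = 1/λ. Let D_t ⊆ M₃(ℂ) be the subspace spanned by t·e₁₁ + e₂₂ + e₃₃, e₁₁ + t·e₂₂ + e₃₃, e₁₂, e₂₁, e₂₃, e₃₂, e₃₁, e₁₃, and let E_t ⊆ M₃(ℂ) be the subspace spanned by t·e₁₁ + √(t/(t+1))·e₃₃, t·e₂₂ + √(t/(t+1))·e₃₃, λe₁₂ + μe₂₁, λe₂₃ + μe₃₂, λe₃₁ + μe₁₃. Then there do not exist nonzero vectors x, y ∈ ℂ³ such that x y* ∈ E_t and x̄ y* ∈ D_t, where x̄ is the entrywise complex conjugate of x. (This is the property guaranteeing that the corresponding PPT matrix X_t is an entangled edge state.) -/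
open Matrix Complex

/-- The subspace `D_t ⊆ M₃(ℂ)` spanned by `t·e₁₁+e₂₂+e₃₃`, `e₁₁+t·e₂₂+e₃₃`, `e₁₂`,
`e₂₁`, `e₂₃`, `e₃₂`, `e₃₁`, `e₁₃`. -/
noncomputable def Dt (t : ℝ) : Submodule ℂ (Matrix (Fin 3) (Fin 3) ℂ) :=
  Submodule.span ℂ
    { !![(t : ℂ), 0, 0; 0, 1, 0; 0, 0, 1],
      !![1, 0, 0; 0, (t : ℂ), 0; 0, 0, 1],
      !![0, 1, 0; 0, 0, 0; 0, 0, 0],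
      !![0, 0, 0; 1, 0, 0; 0, 0, 0],
      !![0, 0, 0; 0, 0, 1; 0, 0, 0],
      !![0, 0, 0; 0, 0, 0; 0, 1, 0],
      !![0, 0, 0; 0, 0, 0; 1, 0, 0],
      !![0, 0, 1; 0, 0, 0; 0, 0, 0] }

/-!
Write `v = ȳ`. Membership in `E_t` forces `μ xᵢ vᵢ₊₁ = λ xᵢ₊₁ vᵢ` for all `i` modulo `3`. Hence `x`
and `v` vanish at the same indices, and multiplying the three relations gives
`μ³ ∏ xᵢ vᵢ = λ³ ∏ xᵢ vᵢ`; as `μ ≠ λ` are real, some coordinate vanishes. If the third does, `D_t`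
gives `x̄₁ v₁ + x̄₂ v₂ = 0`, which together with `μ x₁ v₂ = λ x₂ v₁` yields
`μ |x₁|² + λ |x₂|² = 0`, so `x = 0` because `λ μ > 0`. Otherwise one of the first two does, and
comparing absolute values in the diagonal relations of `E_t` and `D_t` gives
`|t + 1| √(t / (t + 1)) = |t|`, whose square is `t (t + 1) = t²`.
-/

theorem apply_zero_add_apply_one_of_mem_Dt {t : ℝ} {M : Matrix (Fin 3) (Fin 3) ℂ}
    (hM : M ∈ Dt t) : M 0 0 + M 1 1 = (t + 1) * M 2 2 := by
  simp only [Dt, Submodule.mem_span_insert, Submodule.mem_span_singleton] at hM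
  obtain ⟨a, _, ⟨b, _, ⟨_, _, ⟨_, _, ⟨_, _, ⟨_, _, ⟨_, _, ⟨_, rfl⟩, rfl⟩, rfl⟩, rfl⟩, rfl⟩, rfl⟩,
    rfl⟩, rfl⟩ := hM
  simp [mul_add, mul_comm, add_assoc, add_comm, add_left_comm]

theorem exists_eq_of_mem_Et {t lam mu : ℝ} {M : Matrix (Fin 3) (Fin 3) ℂ} (hM : M ∈ Et t lam mu) :
    ∃ a b p q r : ℂ, M =
      !![t * a, lam * p, mu * r;
         mu * p, t * b, lam * q;
         lam * r, mu * q, (Real.sqrt (t / (t + 1)) : ℝ) * (a + b)] := by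
  simp only [Et, Submodule.mem_span_insert, Submodule.mem_span_singleton] at hM
  obtain ⟨a, _, ⟨b, _, ⟨p, _, ⟨q, _, ⟨r, rfl⟩, rfl⟩, rfl⟩, rfl⟩, rfl⟩ := hM
  refine ⟨a, b, p, q, r, ?_⟩
  ext i j
  fin_cases i <;> fin_cases j <;> simp [mul_comm, add_mul]

theorem cyclic_relation_of_mem_Et {t lam mu : ℝ} {M : Matrix (Fin 3) (Fin 3) ℂ}
    (hM : M ∈ Et t lam mu) (i : Fin 3) : (mu : ℂ) * M i (i + 1) = lam * M (i + 1) i := by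
  obtain ⟨a, b, p, q, r, rfl⟩ := exists_eq_of_mem_Et hM
  fin_cases i <;> simp [mul_left_comm]

theorem sqrt_mul_apply_zero_add_apply_one_of_mem_Et {t lam mu : ℝ}
    {M : Matrix (Fin 3) (Fin 3) ℂ} (hM : M ∈ Et t lam mu) :
    ((Real.sqrt (t / (t + 1)) : ℝ) : ℂ) * (M 0 0 + M 1 1) = t * M 2 2 := by
  obtain ⟨a, b, p, q, r, rfl⟩ := exists_eq_of_mem_Et hM
  simp [← mul_add, mul_left_comm]

section CyclicRelation

variable {R : Type*} [CommMonoidWithZero R] {lam mu : R}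

theorem right_eq_zero_of_cyclic_relation [NoZeroDivisors R] {x v : Fin 3 → R} (hlam : lam ≠ 0)
    (hmu : mu ≠ 0) (hx : x ≠ 0) (h : ∀ i, mu * (x i * v (i + 1)) = lam * (x (i + 1) * v i))
    {i : Fin 3} (hxi : x i = 0) : v i = 0 := by
  by_contra hvi
  have hnext : x (i + 1) = 0 := by simpa [hxi, hlam, hvi] using (h i).symm
  have hwrap : ∀ k : Fin 3, k + 2 + 1 = k := by decide
  have hprev : x (i + 2) = 0 := by simpa [hwrap, hxi, hmu, hvi] using h (i + 2)
  refine hx (funext fun j => ?_)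
  have hcases : ∀ k l : Fin 3, l = k ∨ l = k + 1 ∨ l = k + 2 := by decide
  rcases hcases i j with rfl | rfl | rfl <;> assumption

theorem eq_zero_iff_of_cyclic_relation [NoZeroDivisors R] {x v : Fin 3 → R} (hlam : lam ≠ 0)
    (hmu : mu ≠ 0) (hx : x ≠ 0) (hv : v ≠ 0)
    (h : ∀ i, mu * (x i * v (i + 1)) = lam * (x (i + 1) * v i)) (i : Fin 3) :
    x i = 0 ↔ v i = 0 := by
  have hswap : ∀ i, lam * (v i * x (i + 1)) = mu * (v (i + 1) * x i) := fun i => by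
    rw [mul_comm (v i), mul_comm (v (i + 1)), h i]
  exact ⟨right_eq_zero_of_cyclic_relation hlam hmu hx h,
    right_eq_zero_of_cyclic_relation hmu hlam hv hswap⟩

theorem exists_eq_zero_of_perm_relation [Nontrivial R] [IsCancelMulZero R] {ι : Type*} [Fintype ι]
    {x v : ι → R} (σ : Equiv.Perm ι) (hpow : mu ^ Fintype.card ι ≠ lam ^ Fintype.card ι)
    (h : ∀ i, mu * (x i * v (σ i)) = lam * (x (σ i) * v i)) : ∃ i, x i = 0 ∨ v i = 0 := by
  by_contra! hne
  have hprod : (∏ i, x i) * ∏ i, v i ≠ 0 :=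
    mul_ne_zero (Finset.prod_ne_zero_iff.2 fun i _ => (hne i).1)
      (Finset.prod_ne_zero_iff.2 fun i _ => (hne i).2)
  refine hpow (mul_right_cancel₀ hprod ?_)
  calc mu ^ Fintype.card ι * ((∏ i, x i) * ∏ i, v i)
      = ∏ i, mu * (x i * v (σ i)) := by
        simp only [Finset.prod_mul_distrib, Finset.prod_const, Finset.card_univ, Equiv.prod_comp]
    _ = ∏ i, lam * (x (σ i) * v i) := Finset.prod_congr rfl fun i _ => h i
    _ = lam ^ Fintype.card ι * ((∏ i, x i) * ∏ i, v i) := by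
        simp only [Finset.prod_mul_distrib, Finset.prod_const, Finset.card_univ, Equiv.prod_comp]

end CyclicRelation

section RCLike

variable {𝕜 : Type*} [RCLike 𝕜]

theorem eq_zero_of_proportional_of_orthogonal {lam mu : ℝ} (hpos : 0 < lam * mu) {a b u v : 𝕜}
    (huv : u ≠ 0 ∨ v ≠ 0) (hprop : (mu : 𝕜) * (a * v) = lam * (b * u))
    (horth : star a * u + star b * v = 0) : a = 0 ∧ b = 0 := by
  have hu : ((mu : 𝕜) * (star a * a) + lam * (star b * b)) * u = 0 := by
    linear_combination (mu : 𝕜) * a * horth - star b * hprop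
  have hv : ((mu : 𝕜) * (star a * a) + lam * (star b * b)) * v = 0 := by
    linear_combination (lam : 𝕜) * b * horth + star a * hprop
  have hsum : (mu : 𝕜) * (star a * a) + lam * (star b * b) = 0 :=
    huv.elim ((mul_eq_zero.1 hu).resolve_right ·) ((mul_eq_zero.1 hv).resolve_right ·)
  have hnorm : mu * ‖a‖ ^ 2 + lam * ‖b‖ ^ 2 = 0 := by
    simp only [RCLike.star_def, RCLike.conj_mul] at hsum
    exact_mod_cast hsum
  have hlam : lam ≠ 0 := left_ne_zero_of_mul hpos.ne'
  have hscaled : lam * mu * ‖a‖ ^ 2 + lam ^ 2 * ‖b‖ ^ 2 = 0 := by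
    linear_combination lam * hnorm
  simpa [hpos.ne', hlam] using
    (add_eq_zero_iff_of_nonneg (by positivity) (by positivity)).1 hscaled

theorem apply_two_ne_zero_of_diagonal_relation {lam mu : ℝ} (hpos : 0 < lam * mu) {r : 𝕜}
    {x v : Fin 3 → 𝕜} (hx : x ≠ 0) (hzero : ∀ i, x i = 0 ↔ v i = 0)
    (hprop : (mu : 𝕜) * (x 0 * v 1) = lam * (x 1 * v 0))
    (hdiag : star (x 0) * v 0 + star (x 1) * v 1 = r * (star (x 2) * v 2)) : x 2 ≠ 0 := by
  intro hx₂
  have hne : ¬ (x 0 = 0 ∧ x 1 = 0) := fun ⟨hx₀, hx₁⟩ =>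
    hx (funext (Fin.forall_fin_succ.2 ⟨hx₀, Fin.forall_fin_two.2 ⟨hx₁, hx₂⟩⟩))
  have hv : v 0 ≠ 0 ∨ v 1 ≠ 0 := by rwa [hzero, hzero, not_and_or] at hne
  have horth : star (x 0) * v 0 + star (x 1) * v 1 = 0 := by
    rw [hdiag, hx₂, star_zero, zero_mul, mul_zero]
  exact hne (eq_zero_of_proportional_of_orthogonal hpos hv hprop horth)

theorem abs_mul_abs_eq_abs_of_mul_eq {r s t : ℝ} {a b c d : 𝕜} (hcd : c * d ≠ 0)
    (h : (s : 𝕜) * (a * b) = t * (c * d)) (hstar : star a * b = r * (star c * d)) :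
    |r| * |s| = |t| := by
  have hnorm : |s| * (‖a‖ * ‖b‖) = |t| * (‖c‖ * ‖d‖) := by
    simpa only [norm_mul, RCLike.norm_ofReal] using congrArg norm h
  have hnorm_star : ‖a‖ * ‖b‖ = |r| * (‖c‖ * ‖d‖) := by
    simpa only [norm_mul, norm_star, RCLike.norm_ofReal] using congrArg norm hstar
  have hcd_norm : ‖c‖ * ‖d‖ ≠ 0 := by rwa [← norm_mul, norm_ne_zero_iff]
  refine mul_right_cancel₀ hcd_norm ?_
  linear_combination hnorm - |s| * hnorm_star

end RCLike

theorem abs_add_one_mul_abs_sqrt_ne_abs {t : ℝ} (ht : 0 < t / (t + 1)) :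
    |t + 1| * |Real.sqrt (t / (t + 1))| ≠ |t| := by
  intro h
  have ht₀ : t ≠ 0 := (div_ne_zero_iff.1 ht.ne').1
  have ht₁ : t + 1 ≠ 0 := (div_ne_zero_iff.1 ht.ne').2
  have hcancel : t * (t + 1) = t * t :=
    calc t * (t + 1) = (t + 1) ^ 2 * (t / (t + 1)) := by field_simp
      _ = (|t + 1| * |Real.sqrt (t / (t + 1))|) ^ 2 := by
        rw [mul_pow, sq_abs, sq_abs, Real.sq_sqrt ht.le]
      _ = t * t := by rw [h, sq_abs, sq]
  exact absurd (mul_left_cancel₀ ht₀ hcancel) (by simp)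

theorem no_rank_one_in_Et_with_conj_in_Dt_general {t lam mu : ℝ} (ht : 0 < t / (t + 1))
    (hpos : 0 < lam * mu) (hne : lam ≠ mu) :
    ¬ ∃ (x y : Fin 3 → ℂ), x ≠ 0 ∧ y ≠ 0 ∧
        (Matrix.of fun i k => x i * star (y k)) ∈ Et t lam mu ∧
        (Matrix.of fun i k => star (x i) * star (y k)) ∈ Dt t := by
  rintro ⟨x, y, hx, hy, hE, hD⟩
  have hcyc := cyclic_relation_of_mem_Et hE
  have hdiagE := sqrt_mul_apply_zero_add_apply_one_of_mem_Et hE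
  have hdiagD := apply_zero_add_apply_one_of_mem_Dt hD
  simp only [Matrix.of_apply] at hcyc hdiagE hdiagD
  have hlam : (lam : ℂ) ≠ 0 := by exact_mod_cast left_ne_zero_of_mul hpos.ne'
  have hmu : (mu : ℂ) ≠ 0 := by exact_mod_cast right_ne_zero_of_mul hpos.ne'
  have hzero : ∀ i, x i = 0 ↔ star (y i) = 0 :=
    eq_zero_iff_of_cyclic_relation hlam hmu hx (star_ne_zero.2 hy) hcyc
  have hx₂ : x 2 ≠ 0 := apply_two_ne_zero_of_diagonal_relation hpos hx hzero (hcyc 0) hdiagD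
  have hpow : (mu : ℂ) ^ Fintype.card (Fin 3) ≠ (lam : ℂ) ^ Fintype.card (Fin 3) := by
    exact_mod_cast (Odd.pow_injective (by decide : Odd 3)).ne hne.symm
  have hy₂ : y 2 ≠ 0 := star_ne_zero.1 ((hzero 2).not.1 hx₂)
  have hvanish : x 0 = 0 ∨ x 1 = 0 := by
    simpa [Fin.exists_fin_succ, hzero, hy₂] using
      exists_eq_zero_of_perm_relation (x := x) (v := star y) (Equiv.addRight 1) hpow hcyc
  have hcd : x 2 * star (y 2) ≠ 0 := mul_ne_zero hx₂ (star_ne_zero.2 hy₂)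
  refine abs_add_one_mul_abs_sqrt_ne_abs ht ?_
  rcases hvanish with h | h <;>
    exact abs_mul_abs_eq_abs_of_mul_eq hcd (by simpa [h] using hdiagE) (by simpa [h] using hdiagD)

/-- There is no rank one matrix `x y*` in `E_t` with `x̄ y* ∈ D_t`: this is the property
guaranteeing that the PPT matrix `X_t` is an entangled edge state. -/
theorem no_rank_one_in_Et_with_conj_in_Dt (t lam mu : ℝ) (ht : 1 < t) (hlam : 0 < lam)
    (h1 : lam ≠ 1) (hmu : mu = 1 / lam) :
    ¬ ∃ (x y : Fin 3 → ℂ), x ≠ 0 ∧ y ≠ 0 ∧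
        (Matrix.of fun i k => x i * star (y k)) ∈ Et t lam mu ∧
        (Matrix.of fun i k => star (x i) * star (y k)) ∈ Dt t :=
  no_rank_one_in_Et_with_conj_in_Dt_general (by positivity) (by rw [hmu]; positivity) fun h =>
    h1 <| (pow_eq_one_iff_of_nonneg hlam.le two_ne_zero).1 <|
      (sq lam).trans <| (eq_div_iff hlam.ne').1 (h.trans hmu)
end
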